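/- p-entropy hypocoercivity for the kinetic Fokker–Planck equation: for each p ∈ (1,2] there exists an explicit constant k > 0 such that for every smooth h : [0,∞) × 𝕋^d × ℝ^d → ℝ that is bounded above and below by positive constants, has all partial derivatives bounded, satisfies ∫ h(t,·) dμ = 1 for all t, and solves ∂_t h + v·∇_x h = Δ_v h − v·∇_v h, one has for all t ≥ 0: I^{(p)}(h_t) + (27/2) H^{(p)}(h_t) ≤ e^{−kt} (3 I^{(p)}(h_0) + (27/2) H^{(p)}(h_0)); consequently there is a constant C with H^{(p)}(h_t) ≤ C e^{−kt} I^{(p)}(h_0). -/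

import Mathlib

/-!
The proof is a Bakry–Émery computation for a twisted Fisher information, closed by a functional
inequality. Write `L = ∂_t + v·∇_x + v·∇_v - Δ_v`, so that `L h = 0`, and let `ξ = ∂_{xⱼ} h` and
`η = ∂_{vⱼ} h`.

Differentiating the equation gives `L ξ = 0` and `L η = L (ξ + η) = -(ξ + η)`. Since
`(y, z) ↦ y^{p-2} z²` is jointly convex for `p ∈ (1,2]`, one has
`L (h^{p-2} z²) ≤ 2 h^{p-2} z L z`, while `L ((h^p - h)/(p(p-1))) = -h^{p-2} |∇_v h|²`. Hence
`∑ⱼ h^{p-2} (ξ² + η² + (ξ+η)²) + (27/2) (h^p - h)/(p(p-1))` is dissipated pointwise at a rate of at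
least `h^{p-2} |∇_{x,v} h|²`: the cross term of the square `(ξ+η)²` supplies the dissipation in
`x`, and the entropy absorbs the error terms in `η`. The measure `μ` is invariant, so that
`d/dt ∫ f dμ = ∫ L f dμ`; therefore the integral `F` of this density satisfies `F' ≤ -I^{(p)}`,
and `I^{(p)} + (27/2) H^{(p)} ≤ F ≤ 3 I^{(p)} + (27/2) H^{(p)}`.

It remains to bound `H^{(p)}` by `K I^{(p)}`. This is the Poincaré inequality for `μ` applied to
`h^{p/2}`, together with `∫ h^{p/2} dμ ≤ 1`. The Poincaré inequality is proved by interpolating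
between two independent points along a path that rotates the Gaussian variables and translates on
the torus. Gronwall's inequality then gives decay with rate `k = 1 / (3 + (27/2) K)`.
-/

open MeasureTheory Real Filter

noncomputable section

/-- The standard Gaussian density `ℳ(v) = (2π)^{-d/2} exp(-|v|²/2)` on `ℝ^d`. -/
def gauss (d : ℕ) (v : Fin d → ℝ) : ℝ :=
  (2 * Real.pi) ^ (-(d : ℝ) / 2) * Real.exp (-(∑ i, v i ^ 2) / 2)

/-- Fundamental domain `[0,1]^d` of the torus `𝕋^d`; the normalized Lebesgue measure on
the torus is the restriction of Lebesgue measure to this cube. -/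
def cube (d : ℕ) : Set (Fin d → ℝ) := Set.Icc 0 1

/-- A function of `(x,v)` represents a function on `𝕋^d × ℝ^d` iff it is `ℤ^d`-periodic in `x`. -/
def IsPeriodic (d : ℕ) (f : (Fin d → ℝ) → (Fin d → ℝ) → ℝ) : Prop :=
  ∀ (x v : Fin d → ℝ) (k : Fin d → ℤ), f (x + fun i => (k i : ℝ)) v = f x v

/-- The projection `Πf(x) = ∫ f(x,u) ℳ(u) du`. -/
def proj (d : ℕ) (f : (Fin d → ℝ) → (Fin d → ℝ) → ℝ) (x : Fin d → ℝ) : ℝ :=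
  ∫ u, f x u * gauss d u

/-- Euclidean dot product on `ℝ^d`. -/
def dotp (d : ℕ) (a b : Fin d → ℝ) : ℝ := ∑ i, a i * b i

/-- Squared Euclidean norm on `ℝ^d`. -/
def nsq (d : ℕ) (a : Fin d → ℝ) : ℝ := ∑ i, a i ^ 2

/-- Gradient in the `x` variable. -/
def gradx (d : ℕ) (f : (Fin d → ℝ) → (Fin d → ℝ) → ℝ) (x v : Fin d → ℝ) : Fin d → ℝ :=
  fun i => fderiv ℝ (fun y => f y v) x (Pi.single i 1)

/-- Gradient in the `v` variable. -/
def gradv (d : ℕ) (f : (Fin d → ℝ) → (Fin d → ℝ) → ℝ) (x v : Fin d → ℝ) : Fin d → ℝ :=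
  fun i => fderiv ℝ (fun w => f x w) v (Pi.single i 1)

/-- Gradient of a function of `x` only. -/
def grad1 (d : ℕ) (g : (Fin d → ℝ) → ℝ) (x : Fin d → ℝ) : Fin d → ℝ :=
  fun i => fderiv ℝ g x (Pi.single i 1)

/-- Laplacian in the `v` variable. -/
def lapv (d : ℕ) (f : (Fin d → ℝ) → (Fin d → ℝ) → ℝ) (x v : Fin d → ℝ) : ℝ :=
  ∑ i, fderiv ℝ (fun w => gradv d f x w i) v (Pi.single i 1)

/-- Integral against `μ = ℳ(v) dv dx` on `𝕋^d × ℝ^d`. -/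
def intMu (d : ℕ) (F : (Fin d → ℝ) → (Fin d → ℝ) → ℝ) : ℝ :=
  ∫ x in cube d, ∫ v, F x v * gauss d v

/-- `I^X(h) = ∫ |∇_x h|²/h dμ`. -/
def IX (d : ℕ) (h : (Fin d → ℝ) → (Fin d → ℝ) → ℝ) : ℝ :=
  intMu d fun x v => nsq d (gradx d h x v) / h x v

/-- `I^V(h) = ∫ |∇_v h|²/h dμ`. -/
def IV (d : ℕ) (h : (Fin d → ℝ) → (Fin d → ℝ) → ℝ) : ℝ :=
  intMu d fun x v => nsq d (gradv d h x v) / h x v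

/-- `I^M(h) = ∫ (∇_x h · ∇_v h)/h dμ`. -/
def IM (d : ℕ) (h : (Fin d → ℝ) → (Fin d → ℝ) → ℝ) : ℝ :=
  intMu d fun x v => dotp d (gradx d h x v) (gradv d h x v) / h x v

/-- The full Fisher information `I(h) = ∫ |∇_{x,v} h|²/h dμ`. -/
def Ifull (d : ℕ) (h : (Fin d → ℝ) → (Fin d → ℝ) → ℝ) : ℝ :=
  intMu d fun x v => (nsq d (gradx d h x v) + nsq d (gradv d h x v)) / h x v

/-- `I^{ΠX}(h) = ∫_{𝕋^d} |∇_x Πh|²/Πh dx`. -/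
def IPiX (d : ℕ) (h : (Fin d → ℝ) → (Fin d → ℝ) → ℝ) : ℝ :=
  ∫ x in cube d, nsq d (grad1 d (proj d h) x) / proj d h x

/-- `I^{ΠX/X}(h) = ∫ (|∇_x(Πh/h)|²/(Πh/h)) h dμ`. -/
def IPiXX (d : ℕ) (h : (Fin d → ℝ) → (Fin d → ℝ) → ℝ) : ℝ :=
  intMu d fun x v =>
    nsq d (gradx d (fun y w => proj d h y / h y w) x v) / (proj d h x / h x v) * h x v

/-- `I^{ΠV/V}(h) = ∫ (|∇_v h|²/h)(Πh/h) dμ`. -/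
def IPiVV (d : ℕ) (h : (Fin d → ℝ) → (Fin d → ℝ) → ℝ) : ℝ :=
  intMu d fun x v => nsq d (gradv d h x v) / h x v * (proj d h x / h x v)

/-- The relative entropy `H(h) = ∫ h log h dμ`. -/
def Hent (d : ℕ) (h : (Fin d → ℝ) → (Fin d → ℝ) → ℝ) : ℝ :=
  intMu d fun x v => h x v * Real.log (h x v)

/-- The projected entropy `H_Π(h) = ∫_{𝕋^d} Πh log Πh dx`. -/
def HPi (d : ℕ) (h : (Fin d → ℝ) → (Fin d → ℝ) → ℝ) : ℝ :=
  ∫ x in cube d, proj d h x * Real.log (proj d h x)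

/-- The local average speed `U(x) = ∫ v h(x,v) ℳ(v) dv`. -/
def Uvec (d : ℕ) (h : (Fin d → ℝ) → (Fin d → ℝ) → ℝ) (x : Fin d → ℝ) : Fin d → ℝ :=
  fun i => ∫ v, v i * h x v * gauss d v

/-- The divergence `∇_x · U`. -/
def divU (d : ℕ) (h : (Fin d → ℝ) → (Fin d → ℝ) → ℝ) (x : Fin d → ℝ) : ℝ :=
  ∑ i, fderiv ℝ (fun y => Uvec d h y i) x (Pi.single i 1)

/-- The `p`-entropy `H^{(p)}(h) = ∫ (h^p - h)/(p(p-1)) dμ`. -/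
def Hp (d : ℕ) (p : ℝ) (h : (Fin d → ℝ) → (Fin d → ℝ) → ℝ) : ℝ :=
  intMu d fun x v => (h x v ^ p - h x v) / (p * (p - 1))

/-- The projected `p`-entropy `H_Π^{(p)}(h) = ∫_{𝕋^d} ((Πh)^p - Πh)/(p(p-1)) dx`. -/
def HpPi (d : ℕ) (p : ℝ) (h : (Fin d → ℝ) → (Fin d → ℝ) → ℝ) : ℝ :=
  ∫ x in cube d, ((proj d h x) ^ p - proj d h x) / (p * (p - 1))

/-- The `p`-Fisher information `I^{(p)}(h) = ∫ h^{p-2} |∇_{x,v} h|² dμ`. -/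
def Ipfull (d : ℕ) (p : ℝ) (h : (Fin d → ℝ) → (Fin d → ℝ) → ℝ) : ℝ :=
  intMu d fun x v => h x v ^ (p - 2) * (nsq d (gradx d h x v) + nsq d (gradv d h x v))

/-- The spatial `p`-Fisher information `∫ h^{p-2} |∇_x h|² dμ`. -/
def IpX (d : ℕ) (p : ℝ) (h : (Fin d → ℝ) → (Fin d → ℝ) → ℝ) : ℝ :=
  intMu d fun x v => h x v ^ (p - 2) * nsq d (gradx d h x v)

/-- Regularity of a time-dependent `h`: smooth, periodic in `x`, bounded above and below by
positive constants, with all partial derivatives bounded. -/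
def Regular (d : ℕ) (h : ℝ → (Fin d → ℝ) → (Fin d → ℝ) → ℝ) : Prop :=
  ContDiff ℝ (⊤ : ℕ∞) (fun q : ℝ × (Fin d → ℝ) × (Fin d → ℝ) => h q.1 q.2.1 q.2.2) ∧
  (∀ t, IsPeriodic d (h t)) ∧
  (∃ c C : ℝ, 0 < c ∧ ∀ t x v, c ≤ h t x v ∧ h t x v ≤ C) ∧
  (∀ n : ℕ, ∃ C : ℝ, ∀ q : ℝ × (Fin d → ℝ) × (Fin d → ℝ),
    ‖iteratedFDeriv ℝ n (fun r : ℝ × (Fin d → ℝ) × (Fin d → ℝ) => h r.1 r.2.1 r.2.2) q‖ ≤ C)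

/-- Regularity of a time-independent `h`: smooth, periodic in `x`, bounded above and below by
positive constants, with bounded gradient. -/
def RegularStatic (d : ℕ) (h : (Fin d → ℝ) → (Fin d → ℝ) → ℝ) : Prop :=
  ContDiff ℝ (⊤ : ℕ∞) (fun q : (Fin d → ℝ) × (Fin d → ℝ) => h q.1 q.2) ∧
  IsPeriodic d h ∧
  (∃ c C : ℝ, 0 < c ∧ ∀ x v, c ≤ h x v ∧ h x v ≤ C) ∧
  (∃ C : ℝ, ∀ q : (Fin d → ℝ) × (Fin d → ℝ),
    ‖fderiv ℝ (fun r : (Fin d → ℝ) × (Fin d → ℝ) => h r.1 r.2) q‖ ≤ C)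

/-- `h` solves the linear relaxation Boltzmann equation `∂_t h + v·∇_x h = λ(Πh - h)` for `t ≥ 0`. -/
def SolvesLRB (d : ℕ) (lam : ℝ) (h : ℝ → (Fin d → ℝ) → (Fin d → ℝ) → ℝ) : Prop :=
  ∀ t x v, 0 ≤ t →
    deriv (fun s => h s x v) t + dotp d v (gradx d (h t) x v)
      = lam * (proj d (h t) x - h t x v)

/-- `h` solves the free transport equation `∂_t h + v·∇_x h = 0` for `t ≥ 0`. -/
def SolvesTransport (d : ℕ) (h : ℝ → (Fin d → ℝ) → (Fin d → ℝ) → ℝ) : Prop :=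
  ∀ t x v, 0 ≤ t →
    deriv (fun s => h s x v) t + dotp d v (gradx d (h t) x v) = 0

/-- `h` solves the pure relaxation equation `∂_t h = λ(Πh - h)` for `t ≥ 0`. -/
def SolvesCollision (d : ℕ) (lam : ℝ) (h : ℝ → (Fin d → ℝ) → (Fin d → ℝ) → ℝ) : Prop :=
  ∀ t x v, 0 ≤ t →
    deriv (fun s => h s x v) t = lam * (proj d (h t) x - h t x v)

/-- `h` solves the kinetic Fokker–Planck equation `∂_t h + v·∇_x h = Δ_v h - v·∇_v h` for `t ≥ 0`. -/
def SolvesKFP (d : ℕ) (h : ℝ → (Fin d → ℝ) → (Fin d → ℝ) → ℝ) : Prop :=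
  ∀ t x v, 0 ≤ t →
    deriv (fun s => h s x v) t + dotp d v (gradx d (h t) x v)
      = lapv d (h t) x v - dotp d v (gradv d (h t) x v)

/-! ### Directional derivatives and diffusion operators -/

section DiffusionOperator

variable {E : Type*} [NormedAddCommGroup E] [NormedSpace ℝ E] {f g : E → ℝ} {q : E}

/-- The derivative of `f` in the direction `e`, with the base point as last argument so that it
can be iterated and differentiated. -/
def dirDeriv (e : E) (f : E → ℝ) (q : E) : ℝ := fderiv ℝ f q e

lemma dirDeriv_add (e : E) (hf : DifferentiableAt ℝ f q) (hg : DifferentiableAt ℝ g q) :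
    dirDeriv e (fun r => f r + g r) q = dirDeriv e f q + dirDeriv e g q := by
  simp [dirDeriv, fderiv_fun_add hf hg]

lemma dirDeriv_sub (e : E) (hf : DifferentiableAt ℝ f q) (hg : DifferentiableAt ℝ g q) :
    dirDeriv e (fun r => f r - g r) q = dirDeriv e f q - dirDeriv e g q := by
  simp [dirDeriv, fderiv_fun_sub hf hg]

lemma dirDeriv_const_mul (e : E) (c : ℝ) (hf : DifferentiableAt ℝ f q) :
    dirDeriv e (fun r => c * f r) q = c * dirDeriv e f q := by
  simp [dirDeriv, fderiv_const_mul hf]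

lemma dirDeriv_sum {ι : Type*} (s : Finset ι) (e : E) {f : ι → E → ℝ}
    (hf : ∀ i, DifferentiableAt ℝ (f i) q) :
    dirDeriv e (fun r => ∑ i ∈ s, f i r) q = ∑ i ∈ s, dirDeriv e (f i) q := by
  simp [dirDeriv, fderiv_fun_sum fun i _ => hf i]

lemma dirDeriv_mul (e : E) (hf : DifferentiableAt ℝ f q) (hg : DifferentiableAt ℝ g q) :
    dirDeriv e (fun r => f r * g r) q = f q * dirDeriv e g q + g q * dirDeriv e f q := by
  simp [dirDeriv, fderiv_fun_mul hf hg]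

lemma dirDeriv_rpow_const (e : E) (s : ℝ) (hf : DifferentiableAt ℝ f q) (hq : f q ≠ 0) :
    dirDeriv e (fun r => f r ^ s) q = s * f q ^ (s - 1) * dirDeriv e f q := by
  simp [dirDeriv, (hf.hasFDerivAt.rpow_const (Or.inl hq)).fderiv]

lemma dirDeriv_add_direction (e e' : E) (f : E → ℝ) (q : E) :
    dirDeriv (e + e') f q = dirDeriv e f q + dirDeriv e' f q := by
  simp [dirDeriv]

/-- At a point where `f` is not differentiable, `fderiv` is `0` by convention. -/
lemma dirDeriv_eq_zero_of_forall_line {e : E} (hline : ∀ s : ℝ, f (q + s • e) = 0) :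
    dirDeriv e f q = 0 := by
  by_cases hf : DifferentiableAt ℝ f q
  · rw [dirDeriv, ← hf.lineDeriv_eq_fderiv]
    simp [lineDeriv, hline]
  · simp [dirDeriv, fderiv_zero_of_not_differentiableAt hf]

lemma dirDeriv_comp_prodMk_left {F : Type*} [NormedAddCommGroup F] [NormedSpace ℝ F] (e : E)
    {f : E × F → ℝ} {a : E} {b : F} (hf : DifferentiableAt ℝ f (a, b)) :
    dirDeriv e (fun r => f (r, b)) a = dirDeriv (e, 0) f (a, b) := by
  have hcomp : HasFDerivAt (fun r => f (r, b)) _ a :=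
    hf.hasFDerivAt.comp (f := fun r => (r, b)) a (hasFDerivAt_prodMk_left a b)
  rw [dirDeriv, hcomp.fderiv]
  rfl

lemma dirDeriv_comp_prodMk_right {F : Type*} [NormedAddCommGroup F] [NormedSpace ℝ F] (e : F)
    {f : E × F → ℝ} {a : E} {b : F} (hf : DifferentiableAt ℝ f (a, b)) :
    dirDeriv e (fun r => f (a, r)) b = dirDeriv (0, e) f (a, b) := by
  have hcomp : HasFDerivAt (fun r => f (a, r)) _ b :=
    hf.hasFDerivAt.comp (f := fun r => (a, r)) b (hasFDerivAt_prodMk_right a b)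
  rw [dirDeriv, hcomp.fderiv]
  rfl

lemma contDiff_dirDeriv {m n : WithTop ℕ∞} (hf : ContDiff ℝ n f) (hmn : m + 1 ≤ n) (e : E) :
    ContDiff ℝ m (dirDeriv e f) :=
  (hf.fderiv_right hmn).clm_apply contDiff_const

lemma differentiable_dirDeriv (hf : ContDiff ℝ 2 f) (e : E) : Differentiable ℝ (dirDeriv e f) :=
  (contDiff_dirDeriv (m := 1) hf (by norm_num) e).differentiable one_ne_zero

lemma differentiable_fderiv (hf : ContDiff ℝ 2 f) : Differentiable ℝ (fderiv ℝ f) :=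
  (hf.fderiv_right (m := 1) (by norm_num)).differentiable one_ne_zero

lemma dirDeriv_dirDeriv (hf : ContDiff ℝ 2 f) (e e' q : E) :
    dirDeriv e (dirDeriv e' f) q = fderiv ℝ (fderiv ℝ f) q e e' := by
  unfold dirDeriv
  rw [fderiv_clm_apply (differentiable_fderiv hf q) (differentiableAt_const e')]
  simp

lemma dirDeriv_comm (hf : ContDiff ℝ 2 f) (e e' q : E) :
    dirDeriv e (dirDeriv e' f) q = dirDeriv e' (dirDeriv e f) q := by
  have hsymm : IsSymmSndFDerivAt ℝ f q := hf.contDiffAt.isSymmSndFDerivAt (by simp)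
  rw [dirDeriv_dirDeriv hf, dirDeriv_dirDeriv hf, hsymm]

/-- The second-order operator `∂_b - ∑ᵢ ∂_{σᵢ}²` with drift field `b` and constant diffusion
directions `σᵢ`. Time is an ordinary coordinate of `E`, so that solutions of an evolution equation
are the functions annihilated by such an operator. -/
def diffusionOp {ι : Type*} [Fintype ι] (b : E → E) (σ : ι → E) (f : E → ℝ) (q : E) : ℝ :=
  dirDeriv (b q) f q - ∑ i, dirDeriv (σ i) (dirDeriv (σ i) f) q

variable {ι : Type*} [Fintype ι] (b : E → E) (σ : ι → E)

lemma diffusionOp_add (hf : ContDiff ℝ 2 f) (hg : ContDiff ℝ 2 g) (q : E) :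
    diffusionOp b σ (fun r => f r + g r) q = diffusionOp b σ f q + diffusionOp b σ g q := by
  have hf₁ := hf.differentiable two_ne_zero
  have hg₁ := hg.differentiable two_ne_zero
  have hf₂ := differentiable_dirDeriv hf
  have hg₂ := differentiable_dirDeriv hg
  have h e : dirDeriv e (fun r => f r + g r) = fun r => dirDeriv e f r + dirDeriv e g r :=
    funext fun r => dirDeriv_add e (hf₁ r) (hg₁ r)
  simp only [diffusionOp, h, dirDeriv_add _ (hf₂ _ q) (hg₂ _ q), Finset.sum_add_distrib]
  ring

lemma diffusionOp_const_mul (c : ℝ) (hf : ContDiff ℝ 2 f) (q : E) :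
    diffusionOp b σ (fun r => c * f r) q = c * diffusionOp b σ f q := by
  have hf₁ := hf.differentiable two_ne_zero
  have hf₂ := differentiable_dirDeriv hf
  have h e : dirDeriv e (fun r => c * f r) = fun r => c * dirDeriv e f r :=
    funext fun r => dirDeriv_const_mul e c (hf₁ r)
  simp only [diffusionOp, h, dirDeriv_const_mul _ c (hf₂ _ q), ← Finset.mul_sum]
  ring

lemma diffusionOp_sum {κ : Type*} (s : Finset κ) {f : κ → E → ℝ} (hf : ∀ j, ContDiff ℝ 2 (f j))
    (q : E) :
    diffusionOp b σ (fun r => ∑ j ∈ s, f j r) q = ∑ j ∈ s, diffusionOp b σ (f j) q := by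
  have hf₁ j := (hf j).differentiable two_ne_zero
  have hf₂ j := differentiable_dirDeriv (hf j)
  have h e : dirDeriv e (fun r => ∑ j ∈ s, f j r) = fun r => ∑ j ∈ s, dirDeriv e (f j) r :=
    funext fun r => dirDeriv_sum s e fun j => hf₁ j r
  simp only [diffusionOp, h, dirDeriv_sum s _ fun j => hf₂ j _ q, Finset.sum_sub_distrib]
  rw [Finset.sum_comm]

lemma diffusionOp_mul (hf : ContDiff ℝ 2 f) (hg : ContDiff ℝ 2 g) (q : E) :
    diffusionOp b σ (fun r => f r * g r) q
      = f q * diffusionOp b σ g q + g q * diffusionOp b σ f q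
        - 2 * ∑ i, dirDeriv (σ i) f q * dirDeriv (σ i) g q := by
  have hf₁ := hf.differentiable two_ne_zero
  have hg₁ := hg.differentiable two_ne_zero
  have hf₂ := differentiable_dirDeriv hf
  have hg₂ := differentiable_dirDeriv hg
  have h e : dirDeriv e (fun r => f r * g r)
      = fun r => f r * dirDeriv e g r + g r * dirDeriv e f r :=
    funext fun r => dirDeriv_mul e (hf₁ r) (hg₁ r)
  have h' e : dirDeriv e (dirDeriv e fun r => f r * g r) q
      = f q * dirDeriv e (dirDeriv e g) q + g q * dirDeriv e (dirDeriv e f) q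
        + 2 * (dirDeriv e f q * dirDeriv e g q) := by
    rw [h, dirDeriv_add e ((hf₁ q).fun_mul (hg₂ e q)) ((hg₁ q).fun_mul (hf₂ e q)),
      dirDeriv_mul e (hf₁ q) (hg₂ e q), dirDeriv_mul e (hg₁ q) (hf₂ e q)]
    ring
  simp only [diffusionOp, h', dirDeriv_mul _ (hf₁ q) (hg₁ q), Finset.sum_add_distrib,
    ← Finset.mul_sum]
  ring

lemma diffusionOp_rpow_const (s : ℝ) (hf : ContDiff ℝ 2 f) (hpos : ∀ r, 0 < f r) (q : E) :
    diffusionOp b σ (fun r => f r ^ s) q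
      = s * f q ^ (s - 1) * diffusionOp b σ f q
        - s * (s - 1) * f q ^ (s - 2) * ∑ i, dirDeriv (σ i) f q ^ 2 := by
  have hf₁ := hf.differentiable two_ne_zero
  have hf₂ := differentiable_dirDeriv hf
  have h s e : dirDeriv e (fun r => f r ^ s) = fun r => s * f r ^ (s - 1) * dirDeriv e f r :=
    funext fun r => dirDeriv_rpow_const e s (hf₁ r) (hpos r).ne'
  have hpow : DifferentiableAt ℝ (fun r => f r ^ (s - 1)) q :=
    (hf₁ q).rpow_const (Or.inl (hpos q).ne')
  have h' e : dirDeriv e (dirDeriv e fun r => f r ^ s) q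
      = s * f q ^ (s - 1) * dirDeriv e (dirDeriv e f) q
        + s * (s - 1) * f q ^ (s - 2) * dirDeriv e f q ^ 2 := by
    rw [h, dirDeriv_mul e (hpow.const_mul s) (hf₂ e q), dirDeriv_const_mul e s hpow, h,
      show s - 1 - 1 = s - 2 by ring]
    ring
  simp only [diffusionOp, h', dirDeriv_rpow_const _ s (hf₁ q) (hpos q).ne',
    Finset.sum_add_distrib, ← Finset.mul_sum]
  ring

-- The matrix of this quadratic form has determinant `-2 α (α + 1)`.
lemma quadForm_nonneg {α : ℝ} (h₁ : -1 ≤ α) (h₀ : α ≤ 0) (a b : ℝ) :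
    0 ≤ α * (α - 1) * a ^ 2 + 4 * α * (a * b) + 2 * b ^ 2 := by
  nlinarith [sq_nonneg (b + α * a), mul_nonneg (mul_nonneg (neg_nonneg.2 h₀)
    (by linarith : (0 : ℝ) ≤ α + 1)) (sq_nonneg a)]

lemma diffusionOp_rpow_mul_sq (α : ℝ) {h z : E → ℝ} (hh : ContDiff ℝ 2 h)
    (hpos : ∀ r, 0 < h r) (hz : ContDiff ℝ 2 z) (hq : diffusionOp b σ h q = 0) :
    diffusionOp b σ (fun r => h r ^ α * z r ^ 2) q
      = 2 * h q ^ α * z q * diffusionOp b σ z q - h q ^ (α - 2) * ∑ i,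
        (α * (α - 1) * (z q * dirDeriv (σ i) h q) ^ 2
          + 4 * α * ((z q * dirDeriv (σ i) h q) * (h q * dirDeriv (σ i) z q))
          + 2 * (h q * dirDeriv (σ i) z q) ^ 2) := by
  have hz₁ := hz.differentiable two_ne_zero q
  have hpow : ContDiff ℝ 2 fun r => h r ^ α := hh.rpow_const_of_ne fun r => (hpos r).ne'
  have hα₁ : h q ^ (α - 1) = h q ^ (α - 2) * h q := by
    rw [← rpow_add_one (hpos q).ne']; ring_nf
  have hα : h q ^ α = h q ^ (α - 2) * h q ^ 2 := by
    rw [← rpow_add_natCast (hpos q).ne']; norm_num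
  simp only [sq (z _)]
  rw [diffusionOp_mul b σ hpow (hz.mul hz), diffusionOp_mul b σ hz hz,
    diffusionOp_rpow_const b σ α hh hpos, hq, hα]
  simp only [dirDeriv_mul _ hz₁ hz₁, dirDeriv_rpow_const _ α (hh.differentiable two_ne_zero q)
    (hpos q).ne', hα₁]
  have hsum : ∑ i, (α * (α - 1) * (z q * dirDeriv (σ i) h q) ^ 2
      + 4 * α * ((z q * dirDeriv (σ i) h q) * (h q * dirDeriv (σ i) z q))
      + 2 * (h q * dirDeriv (σ i) z q) ^ 2)
      = α * (α - 1) * z q ^ 2 * ∑ i, dirDeriv (σ i) h q ^ 2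
        + 4 * α * z q * h q * ∑ i, dirDeriv (σ i) h q * dirDeriv (σ i) z q
        + 2 * h q ^ 2 * ∑ i, dirDeriv (σ i) z q * dirDeriv (σ i) z q := by
    simp only [Finset.mul_sum, ← Finset.sum_add_distrib]
    exact Finset.sum_congr rfl fun i _ => by ring
  have hcross : ∑ i, α * (h q ^ (α - 2) * h q) * dirDeriv (σ i) h q
        * (z q * dirDeriv (σ i) z q + z q * dirDeriv (σ i) z q)
      = 2 * α * (h q ^ (α - 2) * h q) * z q
        * ∑ i, dirDeriv (σ i) h q * dirDeriv (σ i) z q := by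
    rw [Finset.mul_sum]
    exact Finset.sum_congr rfl fun i _ => by ring
  rw [hsum, hcross]
  ring

/-- The Bakry–Émery mechanism: `(y, z) ↦ y ^ α * z ^ 2` is jointly convex for `α ∈ [-1, 0]`, so the
second-order terms have a sign. -/
lemma diffusionOp_rpow_mul_sq_le {α : ℝ} (h₁ : -1 ≤ α) (h₀ : α ≤ 0) {h z : E → ℝ}
    (hh : ContDiff ℝ 2 h) (hpos : ∀ r, 0 < h r) (hz : ContDiff ℝ 2 z)
    (hq : diffusionOp b σ h q = 0) :
    diffusionOp b σ (fun r => h r ^ α * z r ^ 2) q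
      ≤ 2 * h q ^ α * z q * diffusionOp b σ z q := by
  rw [diffusionOp_rpow_mul_sq b σ α hh hpos hz hq]
  exact sub_le_self _ <| mul_nonneg (rpow_nonneg (hpos q).le _) <|
    Finset.sum_nonneg fun i _ => quadForm_nonneg h₁ h₀ _ _

lemma diffusionOp_dirDeriv (hf : ContDiff ℝ 3 f) (hb : Differentiable ℝ b) (e q : E) :
    diffusionOp b σ (dirDeriv e f) q
      = dirDeriv e (diffusionOp b σ f) q - dirDeriv (fderiv ℝ b q e) f q := by
  have hf₂ : ContDiff ℝ 2 f := hf.of_le (by norm_num)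
  have hd a : ContDiff ℝ 2 (dirDeriv a f) := contDiff_dirDeriv hf (by norm_num) a
  have hdd a : Differentiable ℝ (dirDeriv a (dirDeriv a f)) := differentiable_dirDeriv (hd a) a
  have hDb : HasFDerivAt (fun r => dirDeriv (b r) f r) _ q :=
    (differentiable_fderiv hf₂ q).hasFDerivAt.clm_apply (hb q).hasFDerivAt
  have hdrift : dirDeriv e (fun r => dirDeriv (b r) f r) q
      = dirDeriv (b q) (dirDeriv e f) q + dirDeriv (fderiv ℝ b q e) f q := by
    rw [dirDeriv_comm hf₂, dirDeriv_dirDeriv hf₂, dirDeriv, hDb.fderiv]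
    simp [dirDeriv, add_comm]
  have hsecond i : dirDeriv e (dirDeriv (σ i) (dirDeriv (σ i) f)) q
      = dirDeriv (σ i) (dirDeriv (σ i) (dirDeriv e f)) q := by
    rw [dirDeriv_comm (hd _)]
    congr 1
    exact funext fun r => dirDeriv_comm hf₂ e (σ i) r
  have hsum : DifferentiableAt ℝ
      (fun r => ∑ i, dirDeriv (σ i) (dirDeriv (σ i) f) r) q :=
    DifferentiableAt.fun_sum fun i _ => hdd (σ i) q
  unfold diffusionOp
  rw [dirDeriv_sub e hDb.differentiableAt hsum, dirDeriv_sum _ e fun i => hdd (σ i) q]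
  simp only [hdrift, hsecond]
  ring

end DiffusionOperator

/-! ### The regularity class -/

section Regularity

lemma exists_uniform_bound {α : Type*} {s : Set α} {u : ℕ → α → ℝ}
    (hu : ∀ i, ∃ C, ∀ x ∈ s, u i x ≤ C) (n : ℕ) :
    ∃ C, 1 ≤ C ∧ ∀ i ≤ n, ∀ x ∈ s, u i x ≤ C := by
  induction n with
  | zero =>
    obtain ⟨C, hC⟩ := hu 0
    refine ⟨max 1 C, le_max_left _ _, fun i hi x hx => ?_⟩
    obtain rfl := Nat.le_zero.1 hi
    exact (hC x hx).trans (le_max_right _ _)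
  | succ n ih =>
    obtain ⟨C, hC₁, hC⟩ := ih
    obtain ⟨D, hD⟩ := hu (n + 1)
    refine ⟨max C D, hC₁.trans (le_max_left _ _), fun i hi x hx => ?_⟩
    rcases Nat.le_succ_iff.1 hi with hi | rfl
    · exact (hC i hi x hx).trans (le_max_left _ _)
    · exact (hD x hx).trans (le_max_right _ _)

variable {E : Type*} [NormedAddCommGroup E] [NormedSpace ℝ E]

lemma periodic_fderiv {f : E → ℝ} {k : E} (hf : Function.Periodic f k) :
    Function.Periodic (fderiv ℝ f) k := fun q => by
  rw [← fderiv_comp_add_right, hf.funext]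

/-- The class in which all computations take place: smooth functions, all of whose derivatives
(including the function itself) are bounded, with every element of `Λ` as a period. -/
structure SmoothBoundedPeriodic (Λ : Set E) (f : E → ℝ) : Prop where
  contDiff : ContDiff ℝ (⊤ : ℕ∞) f
  bounded_iteratedFDeriv : ∀ n : ℕ, ∃ C, ∀ q, ‖iteratedFDeriv ℝ n f q‖ ≤ C
  periodic : ∀ k ∈ Λ, Function.Periodic f k

namespace SmoothBoundedPeriodic

variable {Λ : Set E} {f g : E → ℝ}

lemma contDiff_of_nat (hf : SmoothBoundedPeriodic Λ f) (n : ℕ) : ContDiff ℝ n f :=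
  hf.contDiff.of_le (by exact_mod_cast le_top)

lemma differentiable (hf : SmoothBoundedPeriodic Λ f) : Differentiable ℝ f :=
  hf.contDiff.differentiable (by simp)

lemma bounded (hf : SmoothBoundedPeriodic Λ f) : ∃ C, ∀ q, |f q| ≤ C := by
  simpa using hf.bounded_iteratedFDeriv 0

lemma bounded_fderiv (hf : SmoothBoundedPeriodic Λ f) : ∃ C, ∀ q, ‖fderiv ℝ f q‖ ≤ C := by
  simpa [← norm_iteratedFDeriv_fderiv] using hf.bounded_iteratedFDeriv 1

lemma const (c : ℝ) : SmoothBoundedPeriodic Λ fun _ => c where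
  contDiff := contDiff_const
  bounded_iteratedFDeriv n := by
    rcases n with _ | n
    · exact ⟨‖c‖, fun q => by simp⟩
    · exact ⟨0, fun q => by simp [iteratedFDeriv_const_of_ne]⟩
  periodic _ _ _ := rfl

lemma add (hf : SmoothBoundedPeriodic Λ f) (hg : SmoothBoundedPeriodic Λ g) :
    SmoothBoundedPeriodic Λ fun q => f q + g q where
  contDiff := hf.contDiff.add hg.contDiff
  bounded_iteratedFDeriv n := by
    obtain ⟨A, hA⟩ := hf.bounded_iteratedFDeriv n
    obtain ⟨B, hB⟩ := hg.bounded_iteratedFDeriv n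
    refine ⟨A + B, fun q => ?_⟩
    change ‖iteratedFDeriv ℝ n (f + g) q‖ ≤ _
    rw [iteratedFDeriv_add_apply (hf.contDiff_of_nat n).contDiffAt
      (hg.contDiff_of_nat n).contDiffAt]
    exact (norm_add_le _ _).trans (add_le_add (hA q) (hB q))
  periodic k hk := (hf.periodic k hk).add (hg.periodic k hk)

lemma mul (hf : SmoothBoundedPeriodic Λ f) (hg : SmoothBoundedPeriodic Λ g) :
    SmoothBoundedPeriodic Λ fun q => f q * g q where
  contDiff := hf.contDiff.mul hg.contDiff
  bounded_iteratedFDeriv n := by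
    choose A hA using hf.bounded_iteratedFDeriv
    choose B hB using hg.bounded_iteratedFDeriv
    have hA₀ i : 0 ≤ A i := (norm_nonneg _).trans (hA i 0)
    refine ⟨∑ i ∈ Finset.range (n + 1), n.choose i * A i * B (n - i), fun q => ?_⟩
    refine (norm_iteratedFDeriv_mul_le (hf.contDiff_of_nat n) (hg.contDiff_of_nat n) q
      le_rfl).trans ?_
    gcongr with i
    · exact mul_nonneg (Nat.cast_nonneg _) (hA₀ i)
    · exact hA i q
    · exact hB _ q
  periodic k hk := (hf.periodic k hk).mul (hg.periodic k hk)

lemma const_mul (hf : SmoothBoundedPeriodic Λ f) (c : ℝ) :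
    SmoothBoundedPeriodic Λ fun q => c * f q :=
  (const c).mul hf

lemma sq (hf : SmoothBoundedPeriodic Λ f) : SmoothBoundedPeriodic Λ fun q => f q ^ 2 := by
  simpa only [pow_two] using hf.mul hf

lemma sum {ι : Type*} (s : Finset ι) {f : ι → E → ℝ} (hf : ∀ i, SmoothBoundedPeriodic Λ (f i)) :
    SmoothBoundedPeriodic Λ fun q => ∑ i ∈ s, f i q := by
  classical
  induction s using Finset.induction_on with
  | empty => simpa using const 0
  | insert a s ha ih => simpa [Finset.sum_insert ha] using (hf a).add ih

lemma dirDeriv (hf : SmoothBoundedPeriodic Λ f) (e : E) :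
    SmoothBoundedPeriodic Λ (dirDeriv e f) where
  contDiff := contDiff_dirDeriv hf.contDiff (by simp) e
  bounded_iteratedFDeriv n := by
    obtain ⟨C, hC⟩ := hf.bounded_iteratedFDeriv (n + 1)
    have hs : ContDiff ℝ n (fderiv ℝ f) := (hf.contDiff_of_nat (n + 1)).fderiv_right le_rfl
    refine ⟨‖e‖ * C, fun q => ?_⟩
    refine (norm_iteratedFDeriv_clm_apply_const (c := e) hs.contDiffAt le_rfl).trans ?_
    rw [norm_iteratedFDeriv_fderiv]
    exact mul_le_mul_of_nonneg_left (hC q) (norm_nonneg _)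
  periodic k hk q := by simp only [_root_.dirDeriv, periodic_fderiv (hf.periodic k hk) q]

lemma comp (hf : SmoothBoundedPeriodic Λ f) {K : Set ℝ} (hK : IsCompact K)
    (hK' : UniqueDiffOn ℝ K) (hfK : ∀ q, f q ∈ K) {φ : ℝ → ℝ}
    (hφ : ContDiffOn ℝ (⊤ : ℕ∞) φ K) : SmoothBoundedPeriodic Λ fun q => φ (f q) where
  contDiff := hφ.comp_contDiff hf.contDiff hfK
  bounded_iteratedFDeriv n := by
    have hφ' (i : ℕ) : ∃ C, ∀ x ∈ K, ‖iteratedFDerivWithin ℝ i φ K x‖ ≤ C :=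
      hK.exists_bound_of_continuousOn
        (hφ.continuousOn_iteratedFDerivWithin (by exact_mod_cast le_top) hK')
    obtain ⟨C, -, hC⟩ := exists_uniform_bound hφ' n
    obtain ⟨D, hD₁, hD⟩ := exists_uniform_bound (s := Set.univ)
      (u := fun i q => ‖iteratedFDeriv ℝ i f q‖)
      (fun i => by simpa using hf.bounded_iteratedFDeriv i) n
    refine ⟨n.factorial * C * D ^ n, fun q => ?_⟩
    refine norm_iteratedFDeriv_comp_le' (Set.range_subset_iff.2 hfK) hK' hφ hf.contDiff
      (by exact_mod_cast le_top) q (fun i hi => hC i hi _ (hfK q)) fun i hi₁ hi => ?_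
    exact (hD i hi q trivial).trans (le_self_pow₀ hD₁ (by lia))
  periodic k hk := (hf.periodic k hk).comp φ

lemma rpow_const (hf : SmoothBoundedPeriodic Λ f) {c : ℝ} (hc : 0 < c) (hfc : ∀ q, c ≤ f q)
    (s : ℝ) : SmoothBoundedPeriodic Λ fun q => f q ^ s := by
  obtain ⟨M, hM⟩ := hf.bounded
  have hcM : c < |M| + c + 1 := by linarith [abs_nonneg M]
  have hmem q : f q ∈ Set.Icc c (|M| + c + 1) :=
    ⟨hfc q, by linarith [le_abs_self (f q), hM q, le_abs_self M]⟩
  refine hf.comp (φ := fun x => x ^ s) isCompact_Icc (uniqueDiffOn_Icc hcM) hmem fun x hx => ?_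
  exact (contDiffAt_id.rpow_const_of_ne (hc.trans_le hx.1).ne').contDiffWithinAt

end SmoothBoundedPeriodic

end Regularity

/-! ### The measure `μ` and its marginals -/

section PhaseMeasure

/-- Velocities, or positions lifted from the torus to `ℝ^d`. -/
abbrev Vec (d : ℕ) : Type := Fin d → ℝ

/-- Phase space: points `(x, v)`. -/
abbrev Phase (d : ℕ) : Type := Vec d × Vec d

/-- The Gaussian measure `ℳ(v) dv`. -/
def velocityMeasure (d : ℕ) : Measure (Vec d) :=
  Measure.pi fun _ => ProbabilityTheory.gaussianReal 0 1

/-- The normalized Lebesgue measure `dx` of the torus, carried by the unit cube. -/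
def torusMeasure (d : ℕ) : Measure (Vec d) := volume.restrict (cube d)

/-- The measure `μ = ℳ(v) dv dx`. -/
def phaseMeasure (d : ℕ) : Measure (Phase d) := (torusMeasure d).prod (velocityMeasure d)

variable (d : ℕ)

lemma gauss_eq_prod_gaussianPDFReal (v : Vec d) :
    gauss d v = ∏ i, ProbabilityTheory.gaussianPDFReal 0 1 (v i) := by
  have h2π : (0 : ℝ) ≤ 2 * π := by positivity
  simp only [gauss, ProbabilityTheory.gaussianPDFReal, Finset.prod_mul_distrib, ← Real.exp_sum]
  congr 1
  · simp only [Finset.prod_const, Finset.card_univ, Fintype.card_fin, NNReal.coe_one, mul_one]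
    rw [Real.sqrt_eq_rpow, ← Real.rpow_neg h2π, ← Real.rpow_natCast, ← Real.rpow_mul h2π]
    ring_nf
  · simp [Finset.sum_div, Finset.sum_neg_distrib, neg_div]

lemma gauss_pos (v : Vec d) : 0 < gauss d v := by
  unfold gauss; positivity

lemma contDiff_gauss : ContDiff ℝ ⊤ (gauss d) := by
  unfold gauss; fun_prop

lemma measurable_ofReal_gauss : Measurable fun v => ENNReal.ofReal (gauss d v) :=
  (contDiff_gauss d).continuous.measurable.ennreal_ofReal

lemma integrable_gauss : Integrable (gauss d) := by
  simp only [funext (gauss_eq_prod_gaussianPDFReal d)]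
  exact Integrable.fintype_prod fun _ => ProbabilityTheory.integrable_gaussianPDFReal 0 1

lemma velocityMeasure_eq_withDensity :
    velocityMeasure d = volume.withDensity fun v => ENNReal.ofReal (gauss d v) := by
  refine Measure.pi_eq fun s hs => ?_
  rw [withDensity_apply _ (MeasurableSet.univ_pi hs),
    ← ofReal_integral_eq_lintegral_ofReal (integrable_gauss d).integrableOn
      (ae_of_all _ fun v => (gauss_pos d v).le)]
  simp_rw [gauss_eq_prod_gaussianPDFReal,
    ProbabilityTheory.gaussianReal_apply_eq_integral 0 one_ne_zero]
  rw [volume_pi, Measure.restrict_pi_pi, integral_fintype_prod_eq_prod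
    (f := fun _ x => ProbabilityTheory.gaussianPDFReal 0 1 x)]
  exact ENNReal.ofReal_prod_of_nonneg fun i _ => integral_nonneg fun x =>
    ProbabilityTheory.gaussianPDFReal_nonneg _ _ _

lemma integral_velocityMeasure (f : Vec d → ℝ) :
    ∫ v, f v ∂velocityMeasure d = ∫ v, f v * gauss d v := by
  rw [velocityMeasure_eq_withDensity, integral_withDensity_eq_integral_toReal_smul
    (measurable_ofReal_gauss d) (ae_of_all _ fun v => ENNReal.ofReal_lt_top)]
  simp [ENNReal.toReal_ofReal (gauss_pos d _).le, mul_comm]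

lemma integrable_mul_gauss {f : Vec d → ℝ} (hf : Integrable f (velocityMeasure d)) :
    Integrable fun v => f v * gauss d v := by
  rw [velocityMeasure_eq_withDensity, integrable_withDensity_iff_integrable_smul'
    (measurable_ofReal_gauss d) (ae_of_all _ fun v => ENNReal.ofReal_lt_top)] at hf
  simpa [ENNReal.toReal_ofReal (gauss_pos d _).le, mul_comm] using hf

instance isGaussian_velocityMeasure : ProbabilityTheory.IsGaussian (velocityMeasure d) := by
  have h : velocityMeasure d = (ProbabilityTheory.stdGaussian (EuclideanSpace ℝ (Fin d))).map
      (EuclideanSpace.equiv (Fin d) ℝ) := by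
    rw [← ProbabilityTheory.map_pi_eq_stdGaussian, Measure.map_map (by fun_prop) (by fun_prop)]
    exact Measure.map_id.symm
  rw [h]
  infer_instance

instance isProbabilityMeasure_torusMeasure : IsProbabilityMeasure (torusMeasure d) :=
  ⟨by simp [torusMeasure, cube, Real.volume_Icc_pi]⟩

instance isProbabilityMeasure_phaseMeasure : IsProbabilityMeasure (phaseMeasure d) := by
  unfold phaseMeasure; infer_instance

lemma intMu_eq_integral {F : Vec d → Vec d → ℝ}
    (hF : Integrable (fun z : Phase d => F z.1 z.2) (phaseMeasure d)) :
    intMu d F = ∫ z, F z.1 z.2 ∂phaseMeasure d := by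
  rw [phaseMeasure, integral_prod _ hF]
  simp only [integral_velocityMeasure]
  rfl

lemma integral_id_velocityMeasure : ∫ v, id v ∂velocityMeasure d = 0 := by
  have hint := ProbabilityTheory.IsGaussian.integrable_id (μ := velocityMeasure d)
  ext i
  rw [eval_integral fun j => hint.eval j]
  have := integral_comp_eval (μ := fun _ : Fin d => ProbabilityTheory.gaussianReal 0 1)
    (i := i) (f := fun x : ℝ => x) (by fun_prop)
  simpa [velocityMeasure] using this

lemma measurePreserving_rotation_velocityMeasure (θ : ℝ) :
    MeasurePreserving (ContinuousLinearMap.rotation θ : Phase d →L[ℝ] Phase d)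
      ((velocityMeasure d).prod (velocityMeasure d))
      ((velocityMeasure d).prod (velocityMeasure d)) :=
  ⟨by fun_prop,
    ProbabilityTheory.IsGaussian.map_rotation_eq_self (integral_id_velocityMeasure d) θ⟩

section Torus

variable {d}

/-- The vector of `ℝ^d` with integer coordinates `k`: a period of functions on the torus. -/
def latticePoint (k : Fin d → ℤ) : Vec d := fun i => k i

variable (d) in
/-- The lattice `ℤ^d`, as the span of a basis so that `ZSpan.fundamentalDomain` applies. -/
abbrev torusLattice : AddSubgroup (Vec d) :=
  (Submodule.span ℤ (Set.range (Pi.basisFun ℝ (Fin d)))).toAddSubgroup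

lemma torusMeasure_eq_restrict_fundamentalDomain :
    torusMeasure d = volume.restrict (ZSpan.fundamentalDomain (Pi.basisFun ℝ (Fin d))) := by
  refine Measure.restrict_congr_set ?_
  rw [ZSpan.fundamentalDomain_pi_basisFun, volume_pi]
  exact Measure.univ_pi_Ico_ae_eq_Icc.symm

lemma apply_torusLattice_vadd {β : Type*} {f : Vec d → β}
    (hf : ∀ k : Fin d → ℤ, Function.Periodic f (latticePoint k)) (g : torusLattice d) (x : Vec d) :
    f (g +ᵥ x) = f x := by
  obtain ⟨k, hk⟩ := (Submodule.mem_span_range_iff_exists_fun ℤ).1 g.2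
  have hg : (g : Vec d) = latticePoint k := by
    rw [← hk]; ext i; simp [latticePoint, Finset.sum_apply, Pi.single_apply]
  rw [AddSubgroup.vadd_def, vadd_eq_add, add_comm, hg, hf]

lemma isAddFundamentalDomain_torusLattice :
    IsAddFundamentalDomain (torusLattice d)
      (ZSpan.fundamentalDomain (Pi.basisFun ℝ (Fin d))) :=
  ZSpan.isAddFundamentalDomain' _ _

instance : Countable (torusLattice d) :=
  inferInstanceAs (Countable (Submodule.span ℤ (Set.range (Pi.basisFun ℝ (Fin d)))))

lemma lintegral_add_right_torusMeasure {f : Vec d → ENNReal}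
    (hf : ∀ k : Fin d → ℤ, Function.Periodic f (latticePoint k)) (z : Vec d) :
    ∫⁻ x, f (x + z) ∂torusMeasure d = ∫⁻ x, f x ∂torusMeasure d := by
  have hD := isAddFundamentalDomain_torusLattice (d := d)
  rw [torusMeasure_eq_restrict_fundamentalDomain,
    hD.setLIntegral_eq (hD.vadd_of_comm z) f (apply_torusLattice_vadd hf)]
  simp only [add_comm _ z]
  exact (measurePreserving_vadd z volume).setLIntegral_comp_emb
    (measurableEmbedding_const_vadd z) _ _

lemma integral_add_right_torusMeasure {f : Vec d → ℝ}
    (hf : ∀ k : Fin d → ℤ, Function.Periodic f (latticePoint k)) (z : Vec d) :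
    ∫ x, f (x + z) ∂torusMeasure d = ∫ x, f x ∂torusMeasure d := by
  have hD := isAddFundamentalDomain_torusLattice (d := d)
  rw [torusMeasure_eq_restrict_fundamentalDomain,
    hD.setIntegral_eq (hD.vadd_of_comm z) (apply_torusLattice_vadd hf)]
  simp only [add_comm _ z]
  exact ((measurePreserving_vadd z volume).setIntegral_image_emb
    (measurableEmbedding_const_vadd z) _ _).symm

end Torus

section Variance

open ProbabilityTheory

variable {d}

lemma variance_dual_pi {ι : Type*} [Fintype ι] [DecidableEq ι] {ν : ι → Measure ℝ}
    [∀ i, IsProbabilityMeasure (ν i)] (hν : ∀ i, MemLp id 2 (ν i)) (L : StrongDual ℝ (ι → ℝ)) :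
    Var[L; Measure.pi ν] = ∑ i, L (Pi.single i 1) ^ 2 * Var[id; ν i] := by
  have hL : (L : (ι → ℝ) → ℝ) = ∑ i, fun x => L (Pi.single i 1) * x i := by
    ext x
    conv_lhs => rw [pi_eq_sum_univ' x]
    simp [mul_comm]
  conv_lhs => rw [hL, variance_sum_pi (X := fun i x => L (Pi.single i 1) * x)
    fun i => (hν i).const_mul _]
  exact Finset.sum_congr rfl fun i _ => variance_const_mul _ id _

lemma torusMeasure_eq_pi :
    torusMeasure d = Measure.pi fun _ => volume.restrict (Set.Icc (0 : ℝ) 1) := by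
  rw [torusMeasure, cube, ← Set.pi_univ_Icc, volume_pi, Measure.restrict_pi_pi]
  rfl

lemma variance_dual_torusMeasure_le (L : StrongDual ℝ (Vec d)) :
    Var[L; torusMeasure d] ≤ ∑ i, L (Pi.single i 1) ^ 2 := by
  have hprob : IsProbabilityMeasure (volume.restrict (Set.Icc (0 : ℝ) 1)) := ⟨by simp⟩
  have hmem : ∀ᵐ x ∂volume.restrict (Set.Icc (0 : ℝ) 1), id x ∈ Set.Icc (0 : ℝ) 1 :=
    ae_restrict_mem measurableSet_Icc
  have hvar : Var[id; volume.restrict (Set.Icc (0 : ℝ) 1)] ≤ 1 :=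
    (variance_le_sq_of_bounded hmem aemeasurable_id).trans (by norm_num)
  rw [torusMeasure_eq_pi, variance_dual_pi fun _ =>
    memLp_of_bounded hmem aestronglyMeasurable_id 2]
  exact Finset.sum_le_sum fun i _ => mul_le_of_le_one_right (sq_nonneg _) hvar

lemma variance_dual_velocityMeasure (L : StrongDual ℝ (Vec d)) :
    Var[L; velocityMeasure d] = ∑ i, L (Pi.single i 1) ^ 2 := by
  rw [velocityMeasure, variance_dual_pi fun _ => memLp_id_gaussianReal 2]
  simp

lemma memLp_id_torusMeasure : MemLp id 2 (torusMeasure d) := by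
  refine MemLp.of_bound aestronglyMeasurable_id 1 ?_
  filter_upwards [ae_restrict_mem (measurableSet_Icc : MeasurableSet (cube d))] with x hx
  refine (pi_norm_le_iff_of_nonneg zero_le_one).2 fun i => ?_
  simpa [abs_of_nonneg (hx.1 i)] using hx.2 i

lemma variance_dual_phaseMeasure_le (L : StrongDual ℝ (Phase d)) :
    Var[L; phaseMeasure d]
      ≤ ∑ i, (L (Pi.single i 1, 0) ^ 2 + L (0, Pi.single i 1) ^ 2) := by
  rw [phaseMeasure, variance_dual_prod memLp_id_torusMeasure
    (IsGaussian.memLp_id _ _ (by simp)), variance_dual_velocityMeasure, Finset.sum_add_distrib]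
  exact add_le_add_left (variance_dual_torusMeasure_le _) _

end Variance

end PhaseMeasure

/-! ### The Poincaré inequality -/

section Interpolation

lemma sq_sub_le_mul_integral_sq {u u' : ℝ → ℝ} (hu : ∀ s, HasDerivAt u (u' s) s)
    (hu' : Continuous u') {a b : ℝ} (hab : a < b) :
    (u b - u a) ^ 2 ≤ (b - a) * ∫ s in a..b, u' s ^ 2 := by
  have hint : ∫ s in a..b, u' s = u b - u a :=
    intervalIntegral.integral_eq_sub_of_hasDerivAt (fun s _ => hu s) (hu'.intervalIntegrable a b)
  have hsq : 0 ≤ ∫ s in a..b, ((b - a) * u' s - (u b - u a)) ^ 2 :=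
    intervalIntegral.integral_nonneg hab.le fun s _ => sq_nonneg _
  have hexpand : ∫ s in a..b, ((b - a) * u' s - (u b - u a)) ^ 2
      = (b - a) * ((b - a) * ∫ s in a..b, u' s ^ 2) - (b - a) * (u b - u a) ^ 2 := by
    have h s : ((b - a) * u' s - (u b - u a)) ^ 2
        = (b - a) ^ 2 * u' s ^ 2 - 2 * (b - a) * (u b - u a) * u' s + (u b - u a) ^ 2 := by ring
    simp only [h]
    rw [intervalIntegral.integral_add (Continuous.intervalIntegrable ?_ _ _) (by simp),
      intervalIntegral.integral_sub (Continuous.intervalIntegrable ?_ _ _)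
        (Continuous.intervalIntegrable ?_ _ _)] <;> try fun_prop
    simp only [intervalIntegral.integral_const_mul, hint, intervalIntegral.integral_const,
      smul_eq_mul]
    ring
  rw [hexpand, sub_nonneg] at hsq
  exact le_of_mul_le_mul_left hsq (sub_pos.2 hab)

lemma ofReal_sq_sub_le_mul_lintegral {u u' : ℝ → ℝ} (hu : ∀ s, HasDerivAt u (u' s) s)
    (hu' : Continuous u') {a b : ℝ} (hab : a < b) :
    ENNReal.ofReal ((u b - u a) ^ 2)
      ≤ ENNReal.ofReal (b - a) * ∫⁻ s in Set.Ioc a b, ENNReal.ofReal (u' s ^ 2) := by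
  have hsq : Continuous fun s => u' s ^ 2 := by fun_prop
  rw [← ofReal_integral_eq_lintegral_ofReal hsq.integrableOn_Ioc
    (ae_of_all _ fun s => sq_nonneg _), ← ENNReal.ofReal_mul (sub_nonneg.2 hab.le),
    ← intervalIntegral.integral_of_le hab.le]
  exact ENNReal.ofReal_le_ofReal (sq_sub_le_mul_integral_sq hu hu' hab)

lemma lintegral_sq_sub_prod {α : Type*} [MeasurableSpace α] {μ : Measure α}
    [IsProbabilityMeasure μ] {f : α → ℝ} (hf : MemLp f 2 μ) :
    ∫⁻ a, ENNReal.ofReal ((f a.2 - f a.1) ^ 2) ∂μ.prod μ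
      = ENNReal.ofReal (2 * ProbabilityTheory.variance f μ) := by
  have hmem : MemLp (fun a : α × α => -f a.1 + f a.2) 2 (μ.prod μ) :=
    (hf.neg.comp_fst μ).add (hf.comp_snd μ)
  have hmean : ∫ a, (-f a.1 + f a.2) ∂μ.prod μ = 0 := by
    have hint := hf.integrable one_le_two
    rw [integral_add (f := fun a : α × α => -f a.1) (hint.neg.comp_fst μ) (hint.comp_snd μ),
      integral_fun_fst (fun x => -f x), integral_fun_snd f]
    simp [integral_neg]
  have hvar := ProbabilityTheory.variance_add_prod (X := -f) (Y := f) hf.neg hf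
  rw [ProbabilityTheory.variance_neg, ← two_mul] at hvar
  rw [← hvar, Pi.neg_def, hmem.ofReal_variance_eq,
    ProbabilityTheory.evariance_eq_lintegral_ofReal, hmean]
  simp only [sub_zero, neg_add_eq_sub]

variable {d : ℕ}

/-- The squared gradient `|∇_{x,v} f|²`. -/
def gradSq (f : Phase d → ℝ) (z : Phase d) : ℝ :=
  ∑ i, (dirDeriv (Pi.single i 1, 0) f z ^ 2 + dirDeriv (0, Pi.single i 1) f z ^ 2)

lemma gradSq_nonneg (f : Phase d → ℝ) (z : Phase d) : 0 ≤ gradSq f z := by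
  unfold gradSq; positivity

variable (d) in
/-- The barycentre of the unit cube. -/
def cubeCenter : Vec d := ∫ x, x ∂torusMeasure d

/-- The interpolation `s ↦ (x + sin s (y - c), cos s v + sin s w)` between two points `(x, v)` and
`(y, w)` of phase space, where `c` is the centre of the cube. Modulo the lattice, its position has
law `μ` for every `s` if its endpoints are independent of law `μ`. -/
def rotPath (s : ℝ) (a : Phase d × Phase d) : Phase d :=
  (a.1.1 + sin s • (a.2.1 - cubeCenter d), cos s • a.1.2 + sin s • a.2.2)

/-- The velocity of `rotPath`. -/
def rotVel (s : ℝ) (a : Phase d × Phase d) : Phase d :=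
  (cos s • (a.2.1 - cubeCenter d), -sin s • a.1.2 + cos s • a.2.2)

lemma hasDerivAt_rotPath (a : Phase d × Phase d) (s : ℝ) :
    HasDerivAt (fun s => rotPath s a) (rotVel s a) s :=
  (((hasDerivAt_sin s).smul_const (a.2.1 - cubeCenter d)).const_add a.1.1).prodMk
    (((hasDerivAt_cos s).smul_const a.1.2).add ((hasDerivAt_sin s).smul_const a.2.2))

lemma continuous_rotPath : Continuous fun b : ℝ × Phase d × Phase d => rotPath b.1 b.2 := by
  unfold rotPath; fun_prop

lemma continuous_rotVel : Continuous fun b : ℝ × Phase d × Phase d => rotVel b.1 b.2 := by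
  unfold rotVel; fun_prop

@[fun_prop]
lemma measurable_rotPath (s : ℝ) : Measurable (rotPath (d := d) s) := by
  unfold rotPath; fun_prop

@[fun_prop]
lemma measurable_rotVel (s : ℝ) : Measurable (rotVel (d := d) s) := by
  unfold rotVel; fun_prop

lemma lintegral_translate_phaseMeasure {F : Phase d → ENNReal} (hF : Measurable F)
    (hper : ∀ k : Fin d → ℤ, Function.Periodic F (latticePoint k, 0)) (c : Vec d) :
    ∫⁻ z, F (z.1 + c, z.2) ∂phaseMeasure d = ∫⁻ z, F z ∂phaseMeasure d := by
  rw [phaseMeasure, lintegral_prod_symm _ (by fun_prop), lintegral_prod_symm _ (by fun_prop)]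
  refine lintegral_congr fun v => lintegral_add_right_torusMeasure
    (f := fun x => F (x, v)) (fun k x => ?_) c
  simpa using hper k (x, v)

lemma lintegral_phaseMeasure_prod {F : Phase d × Phase d → ENNReal} (hF : Measurable F) :
    ∫⁻ a, F a ∂(phaseMeasure d).prod (phaseMeasure d)
      = ∫⁻ y, ∫⁻ x, ∫⁻ b, F ((x, b.1), (y, b.2)) ∂(velocityMeasure d).prod (velocityMeasure d)
          ∂torusMeasure d ∂torusMeasure d := by
  have hvel (x y : Vec d) :
      ∫⁻ b, F ((x, b.1), (y, b.2)) ∂(velocityMeasure d).prod (velocityMeasure d)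
        = ∫⁻ w, ∫⁻ v, F ((x, v), (y, w)) ∂velocityMeasure d ∂velocityMeasure d :=
    lintegral_prod_symm _ (by fun_prop)
  have hphase (a : Phase d) : ∫⁻ z, F (z, a) ∂phaseMeasure d
      = ∫⁻ x, ∫⁻ v, F ((x, v), a) ∂velocityMeasure d ∂torusMeasure d :=
    lintegral_prod _ (by fun_prop)
  simp only [hvel]
  rw [lintegral_prod_symm _ (by fun_prop), phaseMeasure, lintegral_prod _ (by fun_prop),
    ← phaseMeasure]
  refine lintegral_congr fun y => ?_
  exact (lintegral_congr fun w => hphase (y, w)).trans (lintegral_lintegral_swap (by fun_prop))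

/-- Rotation invariance of the Gaussian in `(v, w)` and translation invariance of the torus
in `x`. -/
lemma lintegral_rotPath_rotVel {G : Phase d × Phase d → ENNReal} (hG : Measurable G)
    (hper : ∀ k : Fin d → ℤ, Function.Periodic G ((latticePoint k, 0), 0)) (s : ℝ) :
    ∫⁻ a, G (rotPath s a, rotVel s a) ∂(phaseMeasure d).prod (phaseMeasure d)
      = ∫⁻ a, G (a.1, (cos s • (a.2.1 - cubeCenter d), a.2.2))
          ∂(phaseMeasure d).prod (phaseMeasure d) := by
  have hrot (x y : Vec d) :
      ∫⁻ b, G (rotPath s ((x, b.1), (y, b.2)), rotVel s ((x, b.1), (y, b.2)))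
          ∂(velocityMeasure d).prod (velocityMeasure d)
        = ∫⁻ b, G ((x + sin s • (y - cubeCenter d), b.1), (cos s • (y - cubeCenter d), b.2))
          ∂(velocityMeasure d).prod (velocityMeasure d) :=
    (measurePreserving_rotation_velocityMeasure d s).lintegral_comp (f := fun b : Phase d =>
      G ((x + sin s • (y - cubeCenter d), b.1), (cos s • (y - cubeCenter d), b.2))) (by fun_prop)
  rw [lintegral_phaseMeasure_prod (by fun_prop), lintegral_phaseMeasure_prod (by fun_prop)]
  simp only [hrot]
  refine lintegral_congr fun y => lintegral_add_right_torusMeasure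
    (f := fun x => ∫⁻ b, G ((x, b.1), (cos s • (y - cubeCenter d), b.2))
      ∂(velocityMeasure d).prod (velocityMeasure d)) (fun k x => lintegral_congr fun b => ?_) _
  simpa using hper k ((x, b.1), (cos s • (y - cubeCenter d), b.2))

lemma integral_id_phaseMeasure : ∫ z, z ∂phaseMeasure d = (cubeCenter d, 0) := by
  have hx := memLp_id_torusMeasure (d := d).integrable one_le_two
  have hv := ProbabilityTheory.IsGaussian.integrable_id (μ := velocityMeasure d)
  rw [cubeCenter, ← integral_id_velocityMeasure d]
  refine (integral_pair (hx.comp_fst (velocityMeasure d)) (hv.comp_snd (torusMeasure d))).trans ?_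
  rw [integral_fun_fst, integral_fun_snd]
  simp

lemma lintegral_sq_dual_le (L : StrongDual ℝ (Phase d)) (s : ℝ) :
    ∫⁻ z, ENNReal.ofReal (L (cos s • (z.1 - cubeCenter d), z.2) ^ 2) ∂phaseMeasure d
      ≤ ENNReal.ofReal (∑ i, (L (Pi.single i 1, 0) ^ 2 + L (0, Pi.single i 1) ^ 2)) := by
  set T : Phase d →L[ℝ] Phase d :=
    (cos s • ContinuousLinearMap.fst ℝ (Vec d) (Vec d)).prod (ContinuousLinearMap.snd ℝ _ _)
  have hid : MemLp id 2 (phaseMeasure d) :=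
    .of_fst_snd ⟨memLp_id_torusMeasure.comp_fst (velocityMeasure d),
      (ProbabilityTheory.IsGaussian.memLp_id _ _ (by simp)).comp_snd (torusMeasure d)⟩
  have hmem : MemLp (L.comp T) 2 (phaseMeasure d) := (L.comp T).comp_memLp' hid
  have hmean : ∫ z, L.comp T z ∂phaseMeasure d = L.comp T (cubeCenter d, 0) := by
    rw [← integral_id_phaseMeasure]
    exact (L.comp T).integral_comp_comm (hid.integrable one_le_two)
  have hcenter (z : Phase d) :
      L (cos s • (z.1 - cubeCenter d), z.2) = L.comp T z - L.comp T (cubeCenter d, 0) := by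
    rw [← map_sub]; simp [T]
  simp only [hcenter, ← hmean]
  rw [← ProbabilityTheory.evariance_eq_lintegral_ofReal, ← hmem.ofReal_variance_eq]
  refine ENNReal.ofReal_le_ofReal ((variance_dual_phaseMeasure_le _).trans ?_)
  refine Finset.sum_le_sum fun i _ => ?_
  have hx : L.comp T (Pi.single i 1, 0) = cos s * L (Pi.single i 1, 0) := by
    rw [← smul_eq_mul, ← map_smul]; simp [T]
  have hv : L.comp T (0, Pi.single i 1) = L (0, Pi.single i 1) := by simp [T]
  rw [hx, hv, mul_pow]
  gcongr
  exact mul_le_of_le_one_left (sq_nonneg _) (cos_sq_le_one s)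

variable {f : Phase d → ℝ}

lemma lintegral_sq_fderiv_rotPath_le (hf : ContDiff ℝ 1 f)
    (hper : ∀ k : Fin d → ℤ, Function.Periodic f (latticePoint k, 0)) (s : ℝ) :
    ∫⁻ a, ENNReal.ofReal (fderiv ℝ f (rotPath s a) (rotVel s a) ^ 2)
        ∂(phaseMeasure d).prod (phaseMeasure d)
      ≤ ∫⁻ z, ENNReal.ofReal (gradSq f z) ∂phaseMeasure d := by
  have hfderiv : Continuous (fderiv ℝ f) := hf.continuous_fderiv one_ne_zero
  have hG : Measurable fun b : Phase d × Phase d => ENNReal.ofReal (fderiv ℝ f b.1 b.2 ^ 2) :=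
    (((hfderiv.comp continuous_fst).clm_apply continuous_snd).pow 2).measurable.ennreal_ofReal
  have hGper (k : Fin d → ℤ) : Function.Periodic
      (fun b : Phase d × Phase d => ENNReal.ofReal (fderiv ℝ f b.1 b.2 ^ 2))
      ((latticePoint k, 0), 0) := fun b => by
    simp only [Prod.fst_add, Prod.snd_add, add_zero, periodic_fderiv (hper k) b.1]
  rw [lintegral_rotPath_rotVel hG hGper s, lintegral_prod _ (by fun_prop)]
  exact lintegral_mono fun z => lintegral_sq_dual_le (fderiv ℝ f z) s

lemma lintegral_sq_sub_rotPath (hf : Continuous f)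
    (hper : ∀ k : Fin d → ℤ, Function.Periodic f (latticePoint k, 0)) :
    ∫⁻ a, ENNReal.ofReal ((f (rotPath (π / 2) a) - f (rotPath 0 a)) ^ 2)
        ∂(phaseMeasure d).prod (phaseMeasure d)
      = ∫⁻ a, ENNReal.ofReal ((f a.2 - f a.1) ^ 2) ∂(phaseMeasure d).prod (phaseMeasure d) := by
  have hend (a : Phase d × Phase d) :
      rotPath (π / 2) a = (a.2.1 + (a.1.1 - cubeCenter d), a.2.2) := by
    simp only [rotPath, sin_pi_div_two, cos_pi_div_two, one_smul, zero_smul, zero_add]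
    congr 1
    abel
  have hstart (a : Phase d × Phase d) : rotPath 0 a = a.1 := by simp [rotPath]
  simp only [hend, hstart]
  rw [lintegral_prod _ (by fun_prop), lintegral_prod _ (by fun_prop)]
  refine lintegral_congr fun z => ?_
  have hF : Measurable fun y => ENNReal.ofReal ((f y - f z) ^ 2) := by fun_prop
  exact lintegral_translate_phaseMeasure hF (fun k y => by simp only [hper k y])
    (z.1 - cubeCenter d)

/-- The Maurey–Pisier argument: integrate along `rotPath` and use Cauchy–Schwarz in `s`. -/
theorem variance_le_integral_gradSq (hf : ContDiff ℝ 1 f)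
    (hper : ∀ k : Fin d → ℤ, Function.Periodic f (latticePoint k, 0))
    (hmem : MemLp f 2 (phaseMeasure d)) (hgrad : Integrable (gradSq f) (phaseMeasure d)) :
    ProbabilityTheory.variance f (phaseMeasure d)
      ≤ π ^ 2 / 8 * ∫ z, gradSq f z ∂phaseMeasure d := by
  set u' : ℝ → Phase d × Phase d → ℝ := fun s a => fderiv ℝ f (rotPath s a) (rotVel s a)
  have hu (a : Phase d × Phase d) (s : ℝ) : HasDerivAt (fun s => f (rotPath s a)) (u' s a) s :=
    (hf.differentiable one_ne_zero _).hasFDerivAt.comp_hasDerivAt s (hasDerivAt_rotPath a s)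
  have hu' : Continuous fun b : ℝ × Phase d × Phase d => u' b.1 b.2 :=
    ((hf.continuous_fderiv one_ne_zero).comp continuous_rotPath).clm_apply continuous_rotVel
  have hcs (a : Phase d × Phase d) :=
    ofReal_sq_sub_le_mul_lintegral (hu a) (hu'.comp (Continuous.prodMk_left a)) pi_div_two_pos
  have key : ENNReal.ofReal (2 * ProbabilityTheory.variance f (phaseMeasure d))
      ≤ ENNReal.ofReal (π / 2 * (π / 2 * ∫ z, gradSq f z ∂phaseMeasure d)) := by
    calc ENNReal.ofReal (2 * ProbabilityTheory.variance f (phaseMeasure d))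
      _ = ∫⁻ a, ENNReal.ofReal ((f (rotPath (π / 2) a) - f (rotPath 0 a)) ^ 2)
            ∂(phaseMeasure d).prod (phaseMeasure d) := by
          rw [lintegral_sq_sub_rotPath hf.continuous hper, lintegral_sq_sub_prod hmem]
      _ ≤ ∫⁻ a, ENNReal.ofReal (π / 2) *
            (∫⁻ s in Set.Ioc 0 (π / 2), ENNReal.ofReal (u' s a ^ 2))
            ∂(phaseMeasure d).prod (phaseMeasure d) :=
          lintegral_mono fun a => by simpa using hcs a
      _ = ENNReal.ofReal (π / 2) * ∫⁻ s in Set.Ioc 0 (π / 2),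
            ∫⁻ a, ENNReal.ofReal (u' s a ^ 2) ∂(phaseMeasure d).prod (phaseMeasure d) := by
          rw [lintegral_const_mul' _ _ ENNReal.ofReal_ne_top, lintegral_lintegral_swap]
          exact ((hu'.comp continuous_swap).pow 2).measurable.ennreal_ofReal.aemeasurable
      _ ≤ ENNReal.ofReal (π / 2) * ∫⁻ _ in Set.Ioc 0 (π / 2),
            ∫⁻ z, ENNReal.ofReal (gradSq f z) ∂phaseMeasure d := by
          gcongr with s
          exact lintegral_sq_fderiv_rotPath_le hf hper s
      _ = ENNReal.ofReal (π / 2 * (π / 2 * ∫ z, gradSq f z ∂phaseMeasure d)) := by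
          rw [setLIntegral_const, ← ofReal_integral_eq_lintegral_ofReal hgrad
              (ae_of_all _ (gradSq_nonneg f)), Real.volume_Ioc, sub_zero,
            mul_comm (ENNReal.ofReal (∫ _, _ ∂_)),
            ENNReal.ofReal_mul (by positivity), ENNReal.ofReal_mul (by positivity)]
  have hint : 0 ≤ ∫ z, gradSq f z ∂phaseMeasure d := integral_nonneg (gradSq_nonneg f)
  have := (ENNReal.ofReal_le_ofReal_iff (by positivity)).1 key
  linarith

end Interpolation

/-! ### The Beckner inequality -/

section Beckner

open Function (uncurry)

variable {d : ℕ} {f : Phase d → ℝ}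

lemma continuous_gradSq (hf : ContDiff ℝ 1 f) : Continuous (gradSq f) := by
  have hf' (e : Phase d) : Continuous (dirDeriv e f) :=
    (contDiff_dirDeriv (m := 0) hf (by simp) e).continuous
  exact continuous_finsetSum _ fun i _ => ((hf' _).pow 2).add ((hf' _).pow 2)

lemma gradSq_le (f : Phase d → ℝ) (z : Phase d) : gradSq f z ≤ 2 * d * ‖fderiv ℝ f z‖ ^ 2 := by
  have hdir {e : Phase d} (he : ‖e‖ = 1) : dirDeriv e f z ^ 2 ≤ ‖fderiv ℝ f z‖ ^ 2 :=
    sq_le_sq.2 <| by simpa [dirDeriv, he] using (fderiv ℝ f z).le_opNorm e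
  calc gradSq f z ≤ ∑ _i : Fin d, (‖fderiv ℝ f z‖ ^ 2 + ‖fderiv ℝ f z‖ ^ 2) :=
        Finset.sum_le_sum fun i _ => add_le_add (hdir (by simp [Pi.norm_single]))
          (hdir (by simp [Pi.norm_single]))
    _ = 2 * d * ‖fderiv ℝ f z‖ ^ 2 := by
        rw [Finset.sum_const, Finset.card_univ, Fintype.card_fin, nsmul_eq_mul]; ring

lemma gradSq_rpow_half (hf : Differentiable ℝ f) (hpos : ∀ z, 0 < f z) (p : ℝ) (z : Phase d) :
    gradSq (fun y => f y ^ (p / 2)) z = (p / 2) ^ 2 * (f z ^ (p - 2) * gradSq f z) := by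
  have hpow : (f z ^ (p / 2 - 1)) ^ 2 = f z ^ (p - 2) := by
    rw [← rpow_mul_natCast (hpos z).le]
    congr 1
    push_cast
    ring
  simp only [gradSq, dirDeriv_rpow_const _ _ (hf z) (hpos z).ne', mul_pow, hpow, Finset.mul_sum]
  exact Finset.sum_congr rfl fun i _ => by ring

variable {h : Vec d → Vec d → ℝ}

lemma gradx_eq_dirDeriv (hh : Differentiable ℝ (uncurry h)) (x v : Vec d) (i : Fin d) :
    gradx d h x v i = dirDeriv (Pi.single i 1, 0) (uncurry h) (x, v) :=
  dirDeriv_comp_prodMk_left _ (hh (x, v))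

lemma gradv_eq_dirDeriv (hh : Differentiable ℝ (uncurry h)) (x v : Vec d) (i : Fin d) :
    gradv d h x v i = dirDeriv (0, Pi.single i 1) (uncurry h) (x, v) :=
  dirDeriv_comp_prodMk_right _ (hh (x, v))

lemma nsq_gradx_add_nsq_gradv (hh : Differentiable ℝ (uncurry h)) (x v : Vec d) :
    nsq d (gradx d h x v) + nsq d (gradv d h x v) = gradSq (uncurry h) (x, v) := by
  simp only [nsq, gradx_eq_dirDeriv hh, gradv_eq_dirDeriv hh, gradSq, Finset.sum_add_distrib]

namespace RegularStatic

variable {p : ℝ} (hh : RegularStatic d h)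
include hh

lemma differentiable : Differentiable ℝ (uncurry h) :=
  ContDiff.differentiable hh.1 (by simp)

lemma pos (z : Phase d) : 0 < uncurry h z := by
  obtain ⟨c, _, hc, hb⟩ := hh.2.2.1
  exact hc.trans_le (hb z.1 z.2).1

lemma exists_rpow_le (s : ℝ) : ∃ M, ∀ z, uncurry h z ^ s ≤ M := by
  obtain ⟨c, C, hc, hb⟩ := hh.2.2.1
  have hcont : ContinuousOn (fun r : ℝ => r ^ s) (Set.Icc c C) :=
    continuousOn_id.rpow_const fun r hr => Or.inl (hc.trans_le hr.1).ne'
  obtain ⟨M, hM⟩ := isCompact_Icc.exists_bound_of_continuousOn hcont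
  exact ⟨M, fun z => (le_abs_self _).trans (hM _ (hb z.1 z.2))⟩

lemma continuous_rpow (s : ℝ) : Continuous fun z => uncurry h z ^ s :=
  hh.differentiable.continuous.rpow_const fun z => Or.inl (hh.pos z).ne'

lemma memLp_rpow (s : ℝ) (q : ENNReal) : MemLp (fun z => uncurry h z ^ s) q (phaseMeasure d) := by
  obtain ⟨M, hM⟩ := hh.exists_rpow_le s
  refine .of_bound (hh.continuous_rpow s).aestronglyMeasurable M (ae_of_all _ fun z => ?_)
  rw [norm_of_nonneg (rpow_nonneg (hh.pos z).le s)]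
  exact hM z

lemma integrable_rpow (s : ℝ) : Integrable (fun z => uncurry h z ^ s) (phaseMeasure d) :=
  memLp_one_iff_integrable.1 (hh.memLp_rpow s 1)

lemma integrable : Integrable (uncurry h) (phaseMeasure d) := by
  simpa only [rpow_one] using hh.integrable_rpow 1

lemma intMu_eq : intMu d h = ∫ z, uncurry h z ∂phaseMeasure d :=
  intMu_eq_integral d hh.integrable

lemma integrable_rpow_mul_gradSq (s : ℝ) :
    Integrable (fun z => uncurry h z ^ s * gradSq (uncurry h) z) (phaseMeasure d) := by
  obtain ⟨M, hM⟩ := hh.exists_rpow_le s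
  obtain ⟨D, hD⟩ := hh.2.2.2
  refine .of_bound ((hh.continuous_rpow s).mul (continuous_gradSq
    (ContDiff.of_le hh.1 (by simp)))).aestronglyMeasurable (M * (2 * d * D ^ 2))
    (ae_of_all _ fun z => ?_)
  have hpow : 0 ≤ uncurry h z ^ s := rpow_nonneg (hh.pos z).le s
  rw [norm_of_nonneg (mul_nonneg hpow (gradSq_nonneg _ _))]
  refine mul_le_mul (hM z) ((gradSq_le _ z).trans ?_) (gradSq_nonneg _ _) (hpow.trans (hM z))
  gcongr
  exact hD z

lemma Ipfull_eq_integral (p : ℝ) :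
    Ipfull d p h = ∫ z, uncurry h z ^ (p - 2) * gradSq (uncurry h) z ∂phaseMeasure d := by
  have hint := hh.integrable_rpow_mul_gradSq (p - 2)
  simp only [Ipfull, nsq_gradx_add_nsq_gradv hh.differentiable]
  exact intMu_eq_integral d hint

lemma Hp_eq_integral (p : ℝ) : Hp d p h
    = ∫ z, (p * (p - 1))⁻¹ * (uncurry h z ^ p - uncurry h z) ∂phaseMeasure d := by
  simp only [Hp, div_eq_inv_mul]
  exact intMu_eq_integral d (((hh.integrable_rpow p).sub hh.integrable).const_mul _)

lemma Ipfull_nonneg (p : ℝ) : 0 ≤ Ipfull d p h := by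
  rw [hh.Ipfull_eq_integral]
  exact integral_nonneg fun z => mul_nonneg (rpow_nonneg (hh.pos z).le _) (gradSq_nonneg _ _)

lemma integral_rpow_le_one (hmass : intMu d h = 1) {s : ℝ} (h₀ : 0 ≤ s) (h₁ : s ≤ 1) :
    ∫ z, uncurry h z ^ s ∂phaseMeasure d ≤ 1 := by
  have hbernoulli (z : Phase d) : uncurry h z ^ s ≤ 1 + s * (uncurry h z - 1) := by
    simpa using rpow_one_add_le_one_add_mul_self (s := uncurry h z - 1)
      (by linarith [hh.pos z]) h₀ h₁
  have hint : Integrable (fun z => s * (uncurry h z - 1)) (phaseMeasure d) :=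
    (hh.integrable.sub (integrable_const 1)).const_mul s
  rw [hh.intMu_eq] at hmass
  calc ∫ z, uncurry h z ^ s ∂phaseMeasure d
    _ ≤ ∫ z, (1 + s * (uncurry h z - 1)) ∂phaseMeasure d :=
        integral_mono (hh.integrable_rpow s) ((integrable_const 1).add hint) hbernoulli
    _ = 1 + s * (∫ z, uncurry h z ∂phaseMeasure d - 1) := by
        rw [integral_add (integrable_const 1) hint, integral_const_mul,
          integral_sub hh.integrable (integrable_const 1)]
        simp
    _ = 1 := by rw [hmass]; ring

lemma variance_rpow_half_le (p : ℝ) :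
    ProbabilityTheory.variance (fun z => uncurry h z ^ (p / 2)) (phaseMeasure d)
      ≤ π ^ 2 / 8 * (p / 2) ^ 2 * Ipfull d p h := by
  have hgrad := gradSq_rpow_half hh.differentiable hh.pos p
  have hsmooth : ContDiff ℝ 1 fun z => uncurry h z ^ (p / 2) :=
    (ContDiff.of_le hh.1 (by simp)).rpow_const_of_ne fun z => (hh.pos z).ne'
  have hper (k : Fin d → ℤ) :
      Function.Periodic (fun z => uncurry h z ^ (p / 2)) (latticePoint k, 0) := fun z => by
    have : uncurry h (z + (latticePoint k, 0)) = uncurry h z := by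
      simp only [uncurry, Prod.fst_add, Prod.snd_add, add_zero]
      exact hh.2.1 z.1 z.2 k
    simp only [this]
  refine (variance_le_integral_gradSq hsmooth hper (hh.memLp_rpow _ 2) ?_).trans_eq ?_
  · simpa only [funext hgrad] using (hh.integrable_rpow_mul_gradSq (p - 2)).const_mul _
  · simp only [hgrad, integral_const_mul, hh.Ipfull_eq_integral, mul_assoc]

end RegularStatic

/-- The constant in the Beckner inequality: `π² / 8` comes from the Poincaré inequality and
`(p / 2)²` from applying it to `h ^ (p / 2)`. -/
def becknerConst (p : ℝ) : ℝ := (p * (p - 1))⁻¹ * (π ^ 2 / 8 * (p / 2) ^ 2)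

lemma becknerConst_nonneg {p : ℝ} (hp : 1 < p) : 0 ≤ becknerConst p := by
  have : 0 < p - 1 := sub_pos.2 hp
  unfold becknerConst
  positivity

/-- Poincaré for `h ^ (p / 2)`, whose mean is at most `1`. -/
theorem Hp_le_becknerConst_mul_Ipfull (hh : RegularStatic d h) (hmass : intMu d h = 1) {p : ℝ}
    (hp₁ : 1 < p) (hp₂ : p ≤ 2) : Hp d p h ≤ becknerConst p * Ipfull d p h := by
  have hmean : (∫ z, uncurry h z ^ (p / 2) ∂phaseMeasure d) ^ 2 ≤ 1 :=
    pow_le_one₀ (integral_nonneg fun z => rpow_nonneg (hh.pos z).le _)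
      (hh.integral_rpow_le_one hmass (by linarith) (by linarith))
  have hsq (z : Phase d) : (uncurry h z ^ (p / 2)) ^ 2 = uncurry h z ^ p := by
    rw [← rpow_mul_natCast (hh.pos z).le]; norm_num
  have hvar := hh.variance_rpow_half_le p
  rw [ProbabilityTheory.variance_eq_sub (hh.memLp_rpow _ 2)] at hvar
  simp only [Pi.pow_apply, hsq] at hvar
  rw [hh.intMu_eq] at hmass
  rw [hh.Hp_eq_integral, integral_const_mul, integral_sub (hh.integrable_rpow p) hh.integrable,
    becknerConst, mul_assoc]
  have := sub_pos.2 hp₁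
  gcongr
  linarith

end Beckner

/-! ### The kinetic Fokker–Planck operator and its invariant measure -/

section Invariance

variable {d : ℕ}

lemma dirDeriv_gauss (i : Fin d) (v : Vec d) :
    dirDeriv (Pi.single i 1) (gauss d) v = -v i * gauss d v := by
  have hsq : HasFDerivAt (fun v : Vec d => ∑ j, v j ^ 2)
      (∑ j, (2 * v j) • (ContinuousLinearMap.proj j : Vec d →L[ℝ] ℝ)) v :=
    HasFDerivAt.fun_sum fun j _ => by simpa using (hasFDerivAt_apply (𝕜 := ℝ) j v).pow 2
  have hexp : HasFDerivAt (gauss d) ((2 * π) ^ (-(d : ℝ) / 2) •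
      rexp (-(∑ j, v j ^ 2) / 2) • (2⁻¹ : ℝ) •
        -∑ j, (2 * v j) • (ContinuousLinearMap.proj j : Vec d →L[ℝ] ℝ)) v := by
    unfold gauss
    simp only [div_eq_mul_inv _ (2 : ℝ)]
    exact (hsq.neg.mul_const (2⁻¹ : ℝ)).exp.const_mul _
  rw [dirDeriv, hexp.fderiv]
  simp [gauss, Pi.single_apply]
  ring

lemma integral_dirDeriv_velocityMeasure {f : Vec d → ℝ} {i : Fin d} (hf : Differentiable ℝ f)
    (hint : Integrable f (velocityMeasure d))
    (hmul : Integrable (fun v => v i * f v) (velocityMeasure d))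
    (hderiv : Integrable (dirDeriv (Pi.single i 1) f) (velocityMeasure d)) :
    ∫ v, dirDeriv (Pi.single i 1) f v ∂velocityMeasure d
      = ∫ v, v i * f v ∂velocityMeasure d := by
  have hgauss (v : Vec d) : fderiv ℝ (gauss d) v (Pi.single i 1) = -v i * gauss d v :=
    dirDeriv_gauss i v
  have hrw (v : Vec d) : f v * (-v i * gauss d v) = -(v i * f v * gauss d v) := by ring
  have hparts := integral_mul_fderiv_eq_neg_fderiv_mul_of_integrable (μ := volume) (f := f)
    (g := gauss d) (v := Pi.single i 1) (integrable_mul_gauss d hderiv)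
    (by simp only [hgauss, hrw]; exact (integrable_mul_gauss d hmul).neg)
    (integrable_mul_gauss d hint) (fun v _ => hf v)
    (fun v _ => (contDiff_gauss d).differentiable (by simp) v)
  simp only [hgauss, hrw, integral_neg, neg_inj] at hparts
  rw [integral_velocityMeasure, integral_velocityMeasure, hparts]
  rfl

/-- Space-time `ℝ × ℝ^d × ℝ^d`, with points `(t, x, v)`. -/
abbrev SpaceTime (d : ℕ) : Type := ℝ × Phase d

variable (d) in
/-- The periods of functions on `ℝ × 𝕋^d × ℝ^d`. -/
def spaceTimeLattice : Set (SpaceTime d) := Set.range fun k => (0, latticePoint k, 0)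

/-- The direction of the partial derivative `∂_t`. -/
def tDir : SpaceTime d := (1, 0)

/-- The direction of the partial derivative `∂_{x_i}`. -/
def xDir (i : Fin d) : SpaceTime d := (0, Pi.single i 1, 0)

/-- The direction of the partial derivative `∂_{v_i}`. -/
def vDir (i : Fin d) : SpaceTime d := (0, 0, Pi.single i 1)

/-- The first-order part `∂_t + v·∇_x + v·∇_v` of the kinetic Fokker–Planck equation. -/
def kfpDrift (q : SpaceTime d) : SpaceTime d := (1, q.2.2, q.2.2)

/-- The operator `∂_t + v·∇_x + v·∇_v - Δ_v`, whose null functions are the solutions of the kinetic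
Fokker–Planck equation. -/
abbrev kfpOp (f : SpaceTime d → ℝ) : SpaceTime d → ℝ := diffusionOp kfpDrift vDir f

section Slices

variable {f : SpaceTime d → ℝ} (hf : Differentiable ℝ f) (t : ℝ) (x v : Vec d)
include hf

lemma deriv_time_slice (z : Phase d) : deriv (fun s => f (s, z)) t = dirDeriv tDir f (t, z) := by
  rw [← fderiv_apply_one_eq_deriv]
  exact dirDeriv_comp_prodMk_left (1 : ℝ) (hf (t, z))

lemma dirDeriv_position_slice (i : Fin d) :
    dirDeriv (Pi.single i 1) (fun y => f (t, y, v)) x = dirDeriv (xDir i) f (t, x, v) := by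
  have hslice : Differentiable ℝ fun z => f (t, z) := hf.comp (by fun_prop)
  rw [dirDeriv_comp_prodMk_left _ (hslice (x, v)), dirDeriv_comp_prodMk_right _ (hf (t, x, v))]
  rfl

lemma dirDeriv_velocity_slice (i : Fin d) :
    dirDeriv (Pi.single i 1) (fun w => f (t, x, w)) v = dirDeriv (vDir i) f (t, x, v) := by
  have hslice : Differentiable ℝ fun z => f (t, z) := hf.comp (by fun_prop)
  rw [dirDeriv_comp_prodMk_right _ (hslice (x, v)), dirDeriv_comp_prodMk_right _ (hf (t, x, v))]
  rfl

lemma gradSq_slice (z : Phase d) : gradSq (fun z => f (t, z)) z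
    = ∑ i, (dirDeriv (xDir i) f (t, z) ^ 2 + dirDeriv (vDir i) f (t, z) ^ 2) := by
  simp only [gradSq, dirDeriv_comp_prodMk_right _ (hf (t, z)), xDir, vDir]

end Slices

lemma dirDeriv_kfpDrift (f : SpaceTime d → ℝ) (q : SpaceTime d) :
    dirDeriv (kfpDrift q) f q = dirDeriv tDir f q + ∑ i, q.2.2 i * dirDeriv (xDir i) f q
      + ∑ i, q.2.2 i * dirDeriv (vDir i) f q := by
  have hdrift : kfpDrift q = tDir + ∑ i, q.2.2 i • xDir i + ∑ i, q.2.2 i • vDir i := by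
    ext <;> simp [kfpDrift, tDir, xDir, vDir, Prod.fst_sum, Prod.snd_sum, Finset.sum_apply,
      Pi.single_apply]
  simp [hdrift, dirDeriv]

namespace SmoothBoundedPeriodic

variable {f : SpaceTime d → ℝ}

lemma integrable_comp {E : Type*} [NormedAddCommGroup E] [NormedSpace ℝ E] {Λ : Set E}
    {f : E → ℝ} (hf : SmoothBoundedPeriodic Λ f) {α : Type*} [TopologicalSpace α]
    [MeasurableSpace α] [OpensMeasurableSpace α] (ν : Measure α)
    [IsFiniteMeasure ν] {ι : α → E} (hι : Continuous ι) : Integrable (fun a => f (ι a)) ν := by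
  obtain ⟨C, hC⟩ := hf.bounded
  exact .of_bound (hf.differentiable.continuous.comp hι).aestronglyMeasurable C
    (ae_of_all _ fun a => hC _)

lemma hasDerivAt_integral_add_smul {E : Type*} [NormedAddCommGroup E] [NormedSpace ℝ E]
    {Λ : Set E} {f : E → ℝ} (hf : SmoothBoundedPeriodic Λ f) {α : Type*} [TopologicalSpace α]
    [MeasurableSpace α] [OpensMeasurableSpace α] (ν : Measure α)
    [IsFiniteMeasure ν] {ι : α → E} (hι : Continuous ι) (e : E) (s : ℝ) :
    HasDerivAt (fun s : ℝ => ∫ a, f (ι a + s • e) ∂ν)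
      (∫ a, _root_.dirDeriv e f (ι a + s • e) ∂ν) s := by
  obtain ⟨C, hC⟩ := (hf.dirDeriv e).bounded
  have hι' (r : ℝ) : Continuous fun a => ι a + r • e := hι.add continuous_const
  have hline (a : α) (r : ℝ) :
      HasDerivAt (fun r => f (ι a + r • e)) (_root_.dirDeriv e f (ι a + r • e)) r := by
    have haff : HasDerivAt (fun r : ℝ => ι a + r • e) e r := by
      simpa using ((hasDerivAt_id r).smul_const e).const_add (ι a)
    exact (hf.differentiable _).hasFDerivAt.comp_hasDerivAt r haff
  exact (hasDerivAt_integral_of_dominated_loc_of_deriv_le univ_mem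
    (Eventually.of_forall fun r => (hf.integrable_comp ν (hι' r)).1) (hf.integrable_comp ν (hι' s))
    ((hf.dirDeriv e).integrable_comp ν (hι' s)).1 (ae_of_all _ fun a r _ => hC _)
    (integrable_const C) (ae_of_all _ fun a r _ => hline a r)).2

variable (hf : SmoothBoundedPeriodic (spaceTimeLattice d) f)
include hf

lemma integrable_slice (t : ℝ) : Integrable (fun z => f (t, z)) (phaseMeasure d) :=
  hf.integrable_comp _ (by fun_prop)

lemma integrable_coord_mul (t : ℝ) (x : Vec d) (i : Fin d) :
    Integrable (fun v => v i * f (t, x, v)) (velocityMeasure d) := by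
  obtain ⟨C, hC⟩ := hf.bounded
  have hid := ProbabilityTheory.IsGaussian.integrable_id (μ := velocityMeasure d)
  exact (hid.eval i).mul_bdd (c := C)
    (hf.integrable_comp _ (ι := fun v => (t, x, v)) (by fun_prop)).1 (ae_of_all _ fun v => hC _)

lemma integrable_slice_coord_mul (t : ℝ) (i : Fin d) :
    Integrable (fun z : Phase d => z.2 i * f (t, z)) (phaseMeasure d) := by
  obtain ⟨C, hC⟩ := hf.bounded
  have hid := ProbabilityTheory.IsGaussian.integrable_id (μ := velocityMeasure d)
  exact ((hid.eval i).comp_snd (torusMeasure d)).mul_bdd (c := C) (hf.integrable_slice t).1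
    (ae_of_all _ fun z => hC _)

/-- The integral over the torus does not change under translations in `x`; the left-hand side is
the derivative of this constant function of the translation parameter. -/
lemma integral_dirDeriv_xDir (t : ℝ) (v : Vec d) (i : Fin d) :
    ∫ x, _root_.dirDeriv (xDir i) f (t, x, v) ∂torusMeasure d = 0 := by
  have hderiv := hf.hasDerivAt_integral_add_smul (torusMeasure d) (ι := fun x => (t, x, v))
    (by fun_prop) (xDir i) 0
  have hconst (s : ℝ) : ∫ x, f ((t, x, v) + s • xDir i) ∂torusMeasure d
      = ∫ x, f (t, x, v) ∂torusMeasure d := by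
    have := integral_add_right_torusMeasure (f := fun x => f (t, x, v))
      (fun k x => by simpa using hf.periodic _ ⟨k, rfl⟩ (t, x, v)) (s • Pi.single i 1)
    simpa [xDir] using this
  simp only [hconst] at hderiv
  simpa using hderiv.unique (hasDerivAt_const _ _)

lemma integral_coord_mul_dirDeriv_xDir (t : ℝ) (i : Fin d) :
    ∫ z, z.2 i * _root_.dirDeriv (xDir i) f (t, z) ∂phaseMeasure d = 0 := by
  have hint := (hf.dirDeriv (xDir i)).integrable_slice_coord_mul t i
  rw [phaseMeasure] at hint ⊢
  rw [integral_prod_symm _ hint]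
  simp [integral_const_mul, hf.integral_dirDeriv_xDir]

lemma integral_dirDeriv_vDir (t : ℝ) (i : Fin d) :
    ∫ z, _root_.dirDeriv (vDir i) f (t, z) ∂phaseMeasure d
      = ∫ z, z.2 i * f (t, z) ∂phaseMeasure d := by
  have hcoord := hf.integrable_slice_coord_mul t i
  have hderiv := (hf.dirDeriv (vDir i)).integrable_slice t
  rw [phaseMeasure] at hcoord hderiv ⊢
  rw [integral_prod _ hcoord, integral_prod _ hderiv]
  refine integral_congr_ae (ae_of_all _ fun x => ?_)
  have hslice : Differentiable ℝ fun v => f (t, x, v) :=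
    hf.differentiable.comp (by fun_prop)
  have hdir : _root_.dirDeriv (Pi.single i 1) (fun v => f (t, x, v))
      = fun v => _root_.dirDeriv (vDir i) f (t, x, v) :=
    funext fun v => dirDeriv_velocity_slice hf.differentiable t x v i
  have hstein := integral_dirDeriv_velocityMeasure hslice
    (hf.integrable_comp _ (by fun_prop)) (hf.integrable_coord_mul t x i)
    (by rw [hdir]; exact (hf.dirDeriv _).integrable_comp _ (by fun_prop))
  simpa only [hdir] using hstein

lemma integrable_kfpOp (t : ℝ) : Integrable (fun z => kfpOp f (t, z)) (phaseMeasure d) := by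
  simp only [diffusionOp, dirDeriv_kfpDrift]
  exact ((((hf.dirDeriv _).integrable_slice t).add (integrable_finsetSum _ fun i _ =>
    (hf.dirDeriv (xDir i)).integrable_slice_coord_mul t i)).add (integrable_finsetSum _ fun i _ =>
    (hf.dirDeriv (vDir i)).integrable_slice_coord_mul t i)).sub (integrable_finsetSum _ fun i _ =>
    ((hf.dirDeriv (vDir i)).dirDeriv (vDir i)).integrable_slice t)

lemma integral_kfpOp (t : ℝ) :
    ∫ z, kfpOp f (t, z) ∂phaseMeasure d = ∫ z, _root_.dirDeriv tDir f (t, z) ∂phaseMeasure d := by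
  have hT := (hf.dirDeriv tDir).integrable_slice t
  have hX (i : Fin d) := (hf.dirDeriv (xDir i)).integrable_slice_coord_mul t i
  have hV (i : Fin d) := (hf.dirDeriv (vDir i)).integrable_slice_coord_mul t i
  have hVV (i : Fin d) := ((hf.dirDeriv (vDir i)).dirDeriv (vDir i)).integrable_slice t
  have hX' := integrable_finsetSum Finset.univ fun i _ => hX i
  have hV' := integrable_finsetSum Finset.univ fun i _ => hV i
  have hVV' := integrable_finsetSum Finset.univ fun i _ => hVV i
  simp only [diffusionOp, dirDeriv_kfpDrift]
  rw [integral_sub (by exact (hT.add hX').add hV') hVV', integral_add (by exact hT.add hX') hV',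
    integral_add hT hX', integral_finsetSum _ fun i _ => hX i, integral_finsetSum _ fun i _ => hV i,
    integral_finsetSum _ fun i _ => hVV i]
  simp only [hf.integral_coord_mul_dirDeriv_xDir, (hf.dirDeriv _).integral_dirDeriv_vDir]
  simp

lemma hasDerivAt_integral_slice (t : ℝ) :
    HasDerivAt (fun t => ∫ z, f (t, z) ∂phaseMeasure d)
      (∫ z, kfpOp f (t, z) ∂phaseMeasure d) t := by
  have hpoint (s : ℝ) (z : Phase d) : ((0 : ℝ), z) + s • tDir = (s, z) := by simp [tDir]
  rw [hf.integral_kfpOp]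
  simpa only [hpoint] using hf.hasDerivAt_integral_add_smul (phaseMeasure d)
    (ι := fun z => (0, z)) (by fun_prop) tDir t

end SmoothBoundedPeriodic

end Invariance

/-! ### Dissipation of the twisted functional -/

section Dissipation

variable {d : ℕ}

/-- The density `U^{p-2} |∂_e U|²` of the `p`-Fisher information in the direction `e`. -/
def fisherAlong (p : ℝ) (U : SpaceTime d → ℝ) (e q : SpaceTime d) : ℝ :=
  U q ^ (p - 2) * dirDeriv e U q ^ 2

/-- The density `U^{p-2} |∇_{x,v} U|²` of the `p`-Fisher information. -/
def fisherDensity (p : ℝ) (U : SpaceTime d → ℝ) (q : SpaceTime d) : ℝ :=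
  ∑ j, (fisherAlong p U (xDir j) q + fisherAlong p U (vDir j) q)

/-- A Fisher information density equivalent to `fisherDensity`, in which the additional directions
`∂_{x_j} + ∂_{v_j}` produce dissipation in `x`. -/
def twistedDensity (p : ℝ) (U : SpaceTime d → ℝ) (q : SpaceTime d) : ℝ :=
  ∑ j, (fisherAlong p U (xDir j) q + fisherAlong p U (vDir j) q
    + fisherAlong p U (xDir j + vDir j) q)

/-- The density `(U^p - U) / (p(p-1))` of the `p`-entropy. -/
def entropyDensity (p : ℝ) (U : SpaceTime d → ℝ) (q : SpaceTime d) : ℝ :=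
  (p * (p - 1))⁻¹ * (U q ^ p - U q)

/-- The density of the Lyapunov functional of the kinetic Fokker–Planck equation. -/
def lyapunovDensity (p : ℝ) (U : SpaceTime d → ℝ) (q : SpaceTime d) : ℝ :=
  twistedDensity p U q + 27 / 2 * entropyDensity p U q

variable {p : ℝ} {U : SpaceTime d → ℝ}

section Comparison

variable (hpos : ∀ r, 0 < U r)
include hpos

lemma fisherAlong_nonneg (e q : SpaceTime d) : 0 ≤ fisherAlong p U e q :=
  mul_nonneg (rpow_nonneg (hpos q).le _) (sq_nonneg _)

lemma fisherDensity_le_twistedDensity (q : SpaceTime d) :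
    fisherDensity p U q ≤ twistedDensity p U q :=
  Finset.sum_le_sum fun _ _ => le_add_of_nonneg_right (fisherAlong_nonneg hpos _ q)

lemma twistedDensity_le_fisherDensity (q : SpaceTime d) :
    twistedDensity p U q ≤ 3 * fisherDensity p U q := by
  simp only [twistedDensity, fisherDensity, Finset.mul_sum, fisherAlong, dirDeriv_add_direction]
  refine Finset.sum_le_sum fun j _ => ?_
  linarith [mul_nonneg (rpow_nonneg (hpos q).le (p - 2))
    (sq_nonneg (dirDeriv (xDir j) U q - dirDeriv (vDir j) U q))]

end Comparison

lemma hasFDerivAt_kfpDrift (q : SpaceTime d) : HasFDerivAt kfpDrift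
    ((0 : SpaceTime d →L[ℝ] ℝ).prod
      (((ContinuousLinearMap.snd ℝ _ _).comp (ContinuousLinearMap.snd ℝ _ _)).prod
        ((ContinuousLinearMap.snd ℝ _ _).comp (ContinuousLinearMap.snd ℝ _ _)))) q := by
  have hsnd : HasFDerivAt (fun q : SpaceTime d => q.2.2) _ q :=
    (((ContinuousLinearMap.snd ℝ (Vec d) (Vec d)).comp
      (ContinuousLinearMap.snd ℝ ℝ (Phase d))).hasFDerivAt)
  exact (hasFDerivAt_const (1 : ℝ) q).prodMk (hsnd.prodMk hsnd)

/-- Since `fderiv kfpDrift q e = (0, e_v, e_v)`, the commutator of `∂_e` with `kfpOp` is the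
derivative in the direction `(0, e_v, e_v)`. -/
lemma kfpOp_dirDeriv (hU : ContDiff ℝ 3 U) (hnull : ∀ q : SpaceTime d, 0 ≤ q.1 → kfpOp U q = 0)
    {q : SpaceTime d} (hq : 0 ≤ q.1) {e : SpaceTime d} (he : e.1 = 0) :
    kfpOp (dirDeriv e U) q = -dirDeriv (0, e.2.2, e.2.2) U q := by
  have hzero : dirDeriv e (kfpOp U) q = 0 :=
    dirDeriv_eq_zero_of_forall_line fun s => hnull _ (by simpa [he] using hq)
  rw [kfpOp, diffusionOp_dirDeriv kfpDrift vDir hU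
    (fun r => (hasFDerivAt_kfpDrift r).differentiableAt), (hasFDerivAt_kfpDrift q).fderiv,
    hzero, zero_sub]
  rfl

lemma kfpOp_entropyDensity (hpos : ∀ r, 0 < U r) (hp : p * (p - 1) ≠ 0) (hU : ContDiff ℝ 2 U)
    {q : SpaceTime d} (hq : kfpOp U q = 0) :
    kfpOp (entropyDensity p U) q = -∑ j, fisherAlong p U (vDir j) q := by
  have hpow (s : ℝ) : ContDiff ℝ 2 fun r => U r ^ s := hU.rpow_const_of_ne fun r => (hpos r).ne'
  have hrw : entropyDensity p U = fun r => (p * (p - 1))⁻¹ * (U r ^ p + -1 * U r) := by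
    ext r; rw [entropyDensity]; ring
  have hneg : ContDiff ℝ 2 fun r => -1 * U r := contDiff_const.mul hU
  rw [kfpOp, hrw, diffusionOp_const_mul _ _ _ ((hpow p).add hneg),
    diffusionOp_add _ _ (hpow p) hneg, diffusionOp_const_mul _ _ _ hU,
    diffusionOp_rpow_const _ _ p hU hpos, show diffusionOp kfpDrift vDir U q = 0 from hq]
  simp only [fisherAlong, ← Finset.mul_sum]
  linear_combination -(U q ^ (p - 2) * ∑ j, dirDeriv (vDir j) U q ^ 2) * inv_mul_cancel₀ hp

section Pointwise

variable (hpos : ∀ r, 0 < U r) (hU : ContDiff ℝ 3 U)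
include hpos hU

lemma contDiff_fisherAlong (e : SpaceTime d) : ContDiff ℝ 2 (fisherAlong p U e) :=
  ((hU.of_le (by norm_num)).rpow_const_of_ne fun r => (hpos r).ne').mul
    ((contDiff_dirDeriv hU (by norm_num) e).pow 2)

lemma contDiff_entropyDensity : ContDiff ℝ 2 (entropyDensity p U) :=
  contDiff_const.mul (((hU.of_le (by norm_num)).rpow_const_of_ne fun r => (hpos r).ne').sub
    (hU.of_le (by norm_num)))

lemma contDiff_twistedDensity : ContDiff ℝ 2 (twistedDensity p U) :=
  ContDiff.sum fun _ _ => ((contDiff_fisherAlong hpos hU _).add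
    (contDiff_fisherAlong hpos hU _)).add (contDiff_fisherAlong hpos hU _)

variable (hp₁ : 1 < p) (hp₂ : p ≤ 2) (hnull : ∀ q : SpaceTime d, 0 ≤ q.1 → kfpOp U q = 0)
  {q : SpaceTime d} (hq : 0 ≤ q.1)
include hp₁ hp₂ hnull hq

lemma kfpOp_fisherAlong_le {e : SpaceTime d} (he : e.1 = 0) :
    kfpOp (fisherAlong p U e) q
      ≤ -(2 * U q ^ (p - 2) * dirDeriv e U q * dirDeriv (0, e.2.2, e.2.2) U q) := by
  have hle := diffusionOp_rpow_mul_sq_le kfpDrift vDir (α := p - 2) (by linarith) (by linarith)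
    (hU.of_le (by norm_num)) hpos (contDiff_dirDeriv hU (by norm_num) e) (hnull q hq)
  rwa [← kfpOp, ← kfpOp, kfpOp_dirDeriv hU hnull hq he, mul_neg] at hle

lemma kfpOp_twistedDensity_le :
    kfpOp (twistedDensity p U) q ≤ -∑ j, 2 * U q ^ (p - 2)
      * ((dirDeriv (xDir j) U q + dirDeriv (vDir j) U q)
        * (dirDeriv (xDir j) U q + 2 * dirDeriv (vDir j) U q)) := by
  have hF e := contDiff_fisherAlong (p := p) hpos hU e
  have hle {e : SpaceTime d} := kfpOp_fisherAlong_le hpos hU hp₁ hp₂ hnull hq (e := e)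
  have hdir (j : Fin d) (z : Vec d) (hz : z = Pi.single j 1) :
      dirDeriv (0, z, z) U q = dirDeriv (xDir j) U q + dirDeriv (vDir j) U q := by
    simp [hz, ← dirDeriv_add_direction, xDir, vDir]
  unfold twistedDensity
  rw [kfpOp, diffusionOp_sum _ _ _ fun j => ((hF _).add (hF _)).add (hF _),
    ← Finset.sum_neg_distrib]
  refine Finset.sum_le_sum fun j _ => ?_
  rw [diffusionOp_add _ _ ((hF _).add (hF _)) (hF _), diffusionOp_add _ _ (hF _) (hF _)]
  have hx : kfpOp (fisherAlong p U (xDir j)) q ≤ 0 :=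
    (hle rfl).trans_eq (by simp [dirDeriv, xDir, ← Prod.zero_eq_mk])
  have hv := hle (e := vDir j) rfl
  have hxv := hle (e := xDir j + vDir j) (add_zero _)
  rw [hdir j (vDir j).2.2 rfl] at hv
  rw [hdir j (xDir j + vDir j).2.2 (zero_add _), dirDeriv_add_direction] at hxv
  linarith

/-- With `ξ = ∂_{x_j} U` and `η = ∂_{v_j} U`, the twisted density contributes
`-2(ξ + η)(ξ + 2η)` and the entropy `-(27/2) η²`; the form `ξ² + 6ξη + (33/2) η²` is
nonnegative, which leaves `-(ξ² + η²)`. -/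
lemma kfpOp_lyapunovDensity_le : kfpOp (lyapunovDensity p U) q ≤ -fisherDensity p U q := by
  have hp : p * (p - 1) ≠ 0 := (mul_pos (by linarith) (by linarith)).ne'
  have htw := kfpOp_twistedDensity_le hpos hU hp₁ hp₂ hnull hq
  have hent := kfpOp_entropyDensity (p := p) hpos hp (hU.of_le (by norm_num)) (hnull q hq)
  have hE : ContDiff ℝ 2 (entropyDensity p U) := contDiff_entropyDensity hpos hU
  unfold lyapunovDensity
  rw [kfpOp, diffusionOp_add _ _ (contDiff_twistedDensity hpos hU) (contDiff_const.mul hE),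
    diffusionOp_const_mul _ _ _ hE, ← kfpOp, ← kfpOp, hent]
  refine (add_le_add_left htw _).trans ?_
  simp only [fisherDensity, fisherAlong, ← Finset.sum_neg_distrib, Finset.mul_sum,
    ← Finset.sum_add_distrib]
  refine Finset.sum_le_sum fun j _ => ?_
  have hform (ξ η : ℝ) : 0 ≤ ξ ^ 2 + 6 * ξ * η + 33 / 2 * η ^ 2 := by
    nlinarith [sq_nonneg (ξ + 3 * η), sq_nonneg η]
  linarith [mul_nonneg (rpow_nonneg (hpos q).le (p - 2))
    (hform (dirDeriv (xDir j) U q) (dirDeriv (vDir j) U q))]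

end Pointwise

end Dissipation

/-! ### Exponential decay -/

lemma le_exp_mul_of_hasDerivAt_le {F F' : ℝ → ℝ} {a : ℝ}
    (hF : ∀ t, 0 ≤ t → HasDerivAt F (F' t) t) (hle : ∀ t, 0 ≤ t → F' t ≤ a * F t)
    {t : ℝ} (ht : 0 ≤ t) : F t ≤ rexp (a * t) * F 0 := by
  have hcont : ContinuousOn F (Set.Icc 0 t) := fun s hs =>
    (hF s hs.1).continuousAt.continuousWithinAt
  have hbound := le_gronwallBound_of_liminf_deriv_right_le hcont (ε := 0)
    (fun s hs _ hr => (hF s hs.1).hasDerivWithinAt.liminf_right_slope_le hr) le_rfl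
    (fun s hs => by simpa using hle s hs.1) t ⟨ht, le_rfl⟩
  simpa [gronwallBound_ε0, mul_comm] using hbound

section Decay

variable {d : ℕ} {p : ℝ}

/-- A time-dependent function of `(x, v)` as a function on space-time. -/
abbrev onSpaceTime (h : ℝ → Vec d → Vec d → ℝ) (q : SpaceTime d) : ℝ := h q.1 q.2.1 q.2.2

/-- The Lyapunov functional of the kinetic Fokker–Planck equation. -/
def lyapunov (p : ℝ) (h : ℝ → Vec d → Vec d → ℝ) (t : ℝ) : ℝ :=
  ∫ z, lyapunovDensity p (onSpaceTime h) (t, z) ∂phaseMeasure d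

namespace Regular

variable {h : ℝ → Vec d → Vec d → ℝ} (hr : Regular d h)
include hr

lemma smoothBoundedPeriodic : SmoothBoundedPeriodic (spaceTimeLattice d) (onSpaceTime h) where
  contDiff := hr.1
  bounded_iteratedFDeriv := hr.2.2.2
  periodic := by
    rintro _ ⟨k, rfl⟩ q
    simp only [onSpaceTime, Prod.fst_add, Prod.snd_add, add_zero]
    exact hr.2.1 q.1 q.2.1 q.2.2 k

lemma pos (q : SpaceTime d) : 0 < onSpaceTime h q := by
  obtain ⟨c, _, hc, hb⟩ := hr.2.2.1
  exact hc.trans_le (hb _ _ _).1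

lemma smoothBoundedPeriodic_rpow (s : ℝ) :
    SmoothBoundedPeriodic (spaceTimeLattice d) fun q => onSpaceTime h q ^ s := by
  obtain ⟨c, _, hc, hb⟩ := hr.2.2.1
  exact hr.smoothBoundedPeriodic.rpow_const hc (fun q => (hb _ _ _).1) s

lemma smoothBoundedPeriodic_fisherAlong (p : ℝ) (e : SpaceTime d) :
    SmoothBoundedPeriodic (spaceTimeLattice d) (fisherAlong p (onSpaceTime h) e) :=
  (hr.smoothBoundedPeriodic_rpow (p - 2)).mul (hr.smoothBoundedPeriodic.dirDeriv e).sq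

lemma smoothBoundedPeriodic_fisherDensity (p : ℝ) :
    SmoothBoundedPeriodic (spaceTimeLattice d) (fisherDensity p (onSpaceTime h)) :=
  .sum _ fun _ => (hr.smoothBoundedPeriodic_fisherAlong p _).add
    (hr.smoothBoundedPeriodic_fisherAlong p _)

lemma smoothBoundedPeriodic_twistedDensity (p : ℝ) :
    SmoothBoundedPeriodic (spaceTimeLattice d) (twistedDensity p (onSpaceTime h)) :=
  .sum _ fun _ => ((hr.smoothBoundedPeriodic_fisherAlong p _).add
    (hr.smoothBoundedPeriodic_fisherAlong p _)).add (hr.smoothBoundedPeriodic_fisherAlong p _)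

lemma smoothBoundedPeriodic_entropyDensity (p : ℝ) :
    SmoothBoundedPeriodic (spaceTimeLattice d) (entropyDensity p (onSpaceTime h)) := by
  have hsub := (hr.smoothBoundedPeriodic_rpow p).add (hr.smoothBoundedPeriodic.const_mul (-1))
  simp only [neg_one_mul, ← sub_eq_add_neg] at hsub
  exact hsub.const_mul _

lemma smoothBoundedPeriodic_lyapunovDensity (p : ℝ) :
    SmoothBoundedPeriodic (spaceTimeLattice d) (lyapunovDensity p (onSpaceTime h)) :=
  (hr.smoothBoundedPeriodic_twistedDensity p).add
    ((hr.smoothBoundedPeriodic_entropyDensity p).const_mul _)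

lemma regularStatic (t : ℝ) : RegularStatic d (h t) := by
  have hU := hr.smoothBoundedPeriodic
  obtain ⟨c, C, hc, hb⟩ := hr.2.2.1
  obtain ⟨D, hD⟩ := hU.bounded_fderiv
  have hslice (z : Phase d) : HasFDerivAt (fun z : Phase d => onSpaceTime h (t, z))
      ((fderiv ℝ (onSpaceTime h) (t, z)).comp (.inr ℝ ℝ (Phase d))) z :=
    (hU.differentiable _).hasFDerivAt.comp z (hasFDerivAt_prodMk_right t z)
  refine ⟨hU.contDiff.comp (contDiff_prodMk_right t), hr.2.1 t, ⟨c, C, hc, hb t⟩, D, fun z => ?_⟩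
  rw [(hslice z).fderiv]
  refine (ContinuousLinearMap.opNorm_comp_le _ _).trans ((mul_le_of_le_one_right
    (norm_nonneg _) (ContinuousLinearMap.norm_inr_le_one ℝ ℝ (Phase d))).trans (hD _))

lemma Ipfull_eq (p t : ℝ) : Ipfull d p (h t)
    = ∫ z, fisherDensity p (onSpaceTime h) (t, z) ∂phaseMeasure d := by
  rw [(hr.regularStatic t).Ipfull_eq_integral]
  refine integral_congr_ae (ae_of_all _ fun z => ?_)
  simp only [fisherDensity, fisherAlong, ← mul_add, ← Finset.mul_sum,
    ← gradSq_slice hr.smoothBoundedPeriodic.differentiable]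
  rfl

lemma Hp_eq (p t : ℝ) : Hp d p (h t)
    = ∫ z, entropyDensity p (onSpaceTime h) (t, z) ∂phaseMeasure d :=
  (hr.regularStatic t).Hp_eq_integral p

lemma kfpOp_eq_zero (hs : SolvesKFP d h) (q : SpaceTime d) (hq : 0 ≤ q.1) :
    kfpOp (onSpaceTime h) q = 0 := by
  obtain ⟨t, x, v⟩ := q
  have hU := hr.smoothBoundedPeriodic
  have htime := deriv_time_slice hU.differentiable t (x, v)
  have hgradx (i : Fin d) : gradx d (h t) x v i = dirDeriv (xDir i) (onSpaceTime h) (t, x, v) :=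
    dirDeriv_position_slice hU.differentiable t x v i
  have hgradv (w : Vec d) (i : Fin d) :
      gradv d (h t) x w i = dirDeriv (vDir i) (onSpaceTime h) (t, x, w) :=
    dirDeriv_velocity_slice hU.differentiable t x w i
  have hlapv : lapv d (h t) x v
      = ∑ i, dirDeriv (vDir i) (dirDeriv (vDir i) (onSpaceTime h)) (t, x, v) :=
    Finset.sum_congr rfl fun i _ => by
      simp only [hgradv]
      exact dirDeriv_velocity_slice (hU.dirDeriv _).differentiable t x v i
  have heq := hs t x v hq
  simp only [dotp, hgradx, hgradv, hlapv] at heq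
  simp only [diffusionOp, dirDeriv_kfpDrift]
  linarith

lemma intMu_eq_intMu_zero (hs : SolvesKFP d h) {t : ℝ} (ht : 0 ≤ t) :
    intMu d (h t) = intMu d (h 0) := by
  have hderiv (s : ℝ) (hs₀ : 0 ≤ s) :
      HasDerivAt (fun s => ∫ z, onSpaceTime h (s, z) ∂phaseMeasure d) 0 s := by
    have := hr.smoothBoundedPeriodic.hasDerivAt_integral_slice s
    simpa [hr.kfpOp_eq_zero hs, hs₀] using this
  rw [(hr.regularStatic t).intMu_eq, (hr.regularStatic 0).intMu_eq]
  exact constant_of_has_deriv_right_zero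
    (fun s hs => (hderiv s hs.1).continuousAt.continuousWithinAt)
    (fun s hs => (hderiv s hs.1).hasDerivWithinAt) t ⟨ht, le_rfl⟩

lemma lyapunov_eq (p t : ℝ) : lyapunov p h t
    = ∫ z, twistedDensity p (onSpaceTime h) (t, z) ∂phaseMeasure d + 27 / 2 * Hp d p (h t) := by
  rw [hr.Hp_eq, ← integral_const_mul]
  exact integral_add ((hr.smoothBoundedPeriodic_twistedDensity p).integrable_slice t)
    (((hr.smoothBoundedPeriodic_entropyDensity p).const_mul _).integrable_slice t)

lemma Ipfull_add_Hp_le_lyapunov (p t : ℝ) :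
    Ipfull d p (h t) + 27 / 2 * Hp d p (h t) ≤ lyapunov p h t := by
  rw [hr.lyapunov_eq, hr.Ipfull_eq]
  exact add_le_add_left (integral_mono
    ((hr.smoothBoundedPeriodic_fisherDensity p).integrable_slice t)
    ((hr.smoothBoundedPeriodic_twistedDensity p).integrable_slice t)
    fun z => fisherDensity_le_twistedDensity hr.pos (t, z)) _

lemma lyapunov_le_Ipfull_add_Hp (p t : ℝ) :
    lyapunov p h t ≤ 3 * Ipfull d p (h t) + 27 / 2 * Hp d p (h t) := by
  rw [hr.lyapunov_eq, hr.Ipfull_eq, ← integral_const_mul]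
  exact add_le_add_left (integral_mono
    ((hr.smoothBoundedPeriodic_twistedDensity p).integrable_slice t)
    (((hr.smoothBoundedPeriodic_fisherDensity p).const_mul _).integrable_slice t)
    fun z => twistedDensity_le_fisherDensity hr.pos (t, z)) _

lemma integral_kfpOp_lyapunovDensity_le (hs : SolvesKFP d h) {p : ℝ} (hp₁ : 1 < p) (hp₂ : p ≤ 2)
    {t : ℝ} (ht : 0 ≤ t) :
    ∫ z, kfpOp (lyapunovDensity p (onSpaceTime h)) (t, z) ∂phaseMeasure d ≤ -Ipfull d p (h t) := by
  rw [hr.Ipfull_eq, ← integral_neg]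
  exact integral_mono ((hr.smoothBoundedPeriodic_lyapunovDensity p).integrable_kfpOp t)
    ((hr.smoothBoundedPeriodic_fisherDensity p).integrable_slice t).neg fun z =>
      kfpOp_lyapunovDensity_le hr.pos (hr.smoothBoundedPeriodic.contDiff_of_nat 3) hp₁ hp₂
        (hr.kfpOp_eq_zero hs) (q := (t, z)) ht

end Regular

/-- The exponential rate of decay of `lyapunov p`: the inverse of the constant in the inequality
`lyapunov p h t ≤ K I^{(p)}(h_t)`. -/
def decayRate (p : ℝ) : ℝ := (3 + 27 / 2 * becknerConst p)⁻¹

lemma decayRate_pos {p : ℝ} (hp : 1 < p) : 0 < decayRate p := by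
  have := becknerConst_nonneg hp
  unfold decayRate
  positivity

variable {h : ℝ → Vec d → Vec d → ℝ} (hr : Regular d h) (hp₁ : 1 < p) (hp₂ : p ≤ 2) {t : ℝ}
include hr hp₁ hp₂

lemma three_mul_Ipfull_add_Hp_le (hmass : intMu d (h t) = 1) :
    3 * Ipfull d p (h t) + 27 / 2 * Hp d p (h t) ≤ (decayRate p)⁻¹ * Ipfull d p (h t) := by
  have := Hp_le_becknerConst_mul_Ipfull (hr.regularStatic t) hmass hp₁ hp₂
  rw [decayRate, inv_inv]
  linarith

theorem lyapunov_le_exp_mul (hmass : intMu d (h 0) = 1) (hs : SolvesKFP d h) (ht : 0 ≤ t) :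
    lyapunov p h t ≤ rexp (-decayRate p * t) * lyapunov p h 0 := by
  have hp := decayRate_pos hp₁
  refine le_exp_mul_of_hasDerivAt_le (fun s _ =>
    (hr.smoothBoundedPeriodic_lyapunovDensity p).hasDerivAt_integral_slice s) (fun s hs₀ => ?_) ht
  have hmass_s : intMu d (h s) = 1 := (hr.intMu_eq_intMu_zero hs hs₀).trans hmass
  have hfisher : decayRate p * lyapunov p h s ≤ Ipfull d p (h s) := by
    rw [← le_inv_mul_iff₀ hp]
    exact (hr.lyapunov_le_Ipfull_add_Hp p s).trans
      (three_mul_Ipfull_add_Hp_le hr hp₁ hp₂ hmass_s)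
  calc ∫ z, kfpOp (lyapunovDensity p (onSpaceTime h)) (s, z) ∂phaseMeasure d
    _ ≤ -Ipfull d p (h s) := hr.integral_kfpOp_lyapunovDensity_le hs hp₁ hp₂ hs₀
    _ ≤ -decayRate p * lyapunov p h s := by linarith

end Decay

/-- `p`-entropy hypocoercivity for the kinetic Fokker–Planck equation:
for `p ∈ (1,2]` there is `k > 0` such that any suitably regular normalized solution satisfies
`I^{(p)}(h_t) + (27/2) H^{(p)}(h_t) ≤ e^{-kt} (3 I^{(p)}(h_0) + (27/2) H^{(p)}(h_0))`;
consequently there is `C` with `H^{(p)}(h_t) ≤ C e^{-kt} I^{(p)}(h_0)`. -/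
theorem kinetic_fokker_planck_p_entropy_hypocoercivity
    (d : ℕ) (hd : 1 ≤ d) (p : ℝ) (hp1 : 1 < p) (hp2 : p ≤ 2) :
    ∃ k C : ℝ, 0 < k ∧ 0 < C ∧
      ∀ h : ℝ → (Fin d → ℝ) → (Fin d → ℝ) → ℝ,
        Regular d h →
        (∀ t, 0 ≤ t → intMu d (h t) = 1) →
        SolvesKFP d h →
        ∀ t : ℝ, 0 ≤ t →
          Ipfull d p (h t) + (27 / 2) * Hp d p (h t)
              ≤ Real.exp (-k * t) * (3 * Ipfull d p (h 0) + (27 / 2) * Hp d p (h 0)) ∧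
          Hp d p (h t) ≤ C * Real.exp (-k * t) * Ipfull d p (h 0) := by
  have hk := decayRate_pos hp1
  refine ⟨decayRate p, 2 / 27 * (decayRate p)⁻¹, hk, by positivity, fun h hr hmass hs t ht => ?_⟩
  have hdecay : Ipfull d p (h t) + 27 / 2 * Hp d p (h t)
      ≤ rexp (-decayRate p * t) * (3 * Ipfull d p (h 0) + 27 / 2 * Hp d p (h 0)) :=
    calc Ipfull d p (h t) + 27 / 2 * Hp d p (h t)
      _ ≤ lyapunov p h t := hr.Ipfull_add_Hp_le_lyapunov p t
      _ ≤ rexp (-decayRate p * t) * lyapunov p h 0 :=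
          lyapunov_le_exp_mul hr hp1 hp2 (hmass 0 le_rfl) hs ht
      _ ≤ _ := by gcongr; exact hr.lyapunov_le_Ipfull_add_Hp p 0
  refine ⟨hdecay, ?_⟩
  have hfisher := (hr.regularStatic t).Ipfull_nonneg p
  have hinit : 3 * Ipfull d p (h 0) + 27 / 2 * Hp d p (h 0)
      ≤ (decayRate p)⁻¹ * Ipfull d p (h 0) :=
    three_mul_Ipfull_add_Hp_le hr hp1 hp2 (hmass 0 le_rfl)
  linarith [mul_le_mul_of_nonneg_left hinit (exp_pos (-decayRate p * t)).le]

end
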